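/- arXiv:1809.04888 — 2 statements merged into one kernel-verified Lean document; each statement's English description precedes it below -/
import Mathlib

section
/- For every integer k ≥ 2, as N → ∞, ∑_{k-free n ≥ 1 : every prime factor of n is ≤ N} 1/( n_{(k−1)-free} · φ(n_{(k−1)-power}) ) ∼ e^γ · log N, i.e. the ratio of the two sides tends to 1. -/
open Filter
open scoped Classical

/-- `n` is `k`-free: no `k`-th power of a prime divides `n`. -/
def KFree (k n : ℕ) : Prop := ∀ p : ℕ, p.Prime → ¬ p ^ k ∣ n

/-- The `m`-free part of `n`: each prime `p` appearing with exponent `e` in `n` contributes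
`p ^ (e % m)`.  In particular the `1`-free part of any `n` is `1`. -/
def freePart (m n : ℕ) : ℕ := n.factorization.prod fun p e => p ^ (e % m)

/-- The `m`-power part of `n`: each prime `p` appearing with exponent `e` in `n` contributes
`p ^ (m * (e / m))`, so the result is a perfect `m`-th power, and
`n = freePart m n * powerPart m n`.  In particular the `1`-power part of `n` is `n` itself. -/
def powerPart (m n : ℕ) : ℕ := n.factorization.prod fun p e => p ^ (m * (e / m))

lemma freePart_mul_of_coprime {m a b : ℕ} (h : a.Coprime b) :
    freePart m (a * b) = freePart m a * freePart m b := by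
  unfold freePart
  rw [Nat.factorization_mul_of_coprime h, Finsupp.prod_add_index_of_disjoint]
  simpa using h.disjoint_primeFactors

lemma powerPart_mul_of_coprime {m a b : ℕ} (h : a.Coprime b) :
    powerPart m (a * b) = powerPart m a * powerPart m b := by
  unfold powerPart
  rw [Nat.factorization_mul_of_coprime h, Finsupp.prod_add_index_of_disjoint]
  simpa using h.disjoint_primeFactors

lemma powerPart_dvd (m : ℕ) {n : ℕ} (hn : n ≠ 0) : powerPart m n ∣ n := by
  conv_rhs => rw [← Nat.prod_factorization_pow_eq_self hn]
  exact Finset.prod_dvd_prod_of_dvd _ _ fun p _ => pow_dvd_pow _ (Nat.mul_div_le _ _)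

lemma freePart_prime_pow (m : ℕ) {p e : ℕ} (hp : p.Prime) :
    freePart m (p ^ e) = p ^ (e % m) := by
  unfold freePart
  rw [hp.factorization_pow, Finsupp.prod_single_index (by simp)]

lemma powerPart_prime_pow (m : ℕ) {p e : ℕ} (hp : p.Prime) :
    powerPart m (p ^ e) = p ^ (m * (e / m)) := by
  unfold powerPart
  rw [hp.factorization_pow, Finsupp.prod_single_index (by simp)]

lemma kFree_mul_iff_of_coprime {k a b : ℕ} (hk : k ≠ 0) (h : a.Coprime b) :
    KFree k (a * b) ↔ KFree k a ∧ KFree k b := by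
  unfold KFree
  rw [← forall_and]
  refine forall_congr' fun p => ?_
  rw [← imp_and]
  refine imp_congr_right fun hp => ?_
  rw [h.isPrimePow_dvd_mul (hp.isPrimePow.pow hk), not_or]

lemma kFree_prime_pow_iff {k p e : ℕ} (hk : k ≠ 0) (hp : p.Prime) :
    KFree k (p ^ e) ↔ e < k := by
  constructor
  · intro h
    by_contra! hle
    exact h p hp (pow_dvd_pow p hle)
  · intro hlt q hq hdvd
    obtain rfl := (Nat.prime_dvd_prime_iff_eq hq hp).1
      (hq.dvd_of_dvd_pow ((dvd_pow_self q hk).trans hdvd))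
    exact absurd ((Nat.pow_dvd_pow_iff_le_right hq.one_lt).1 hdvd) (by omega)

/-- The summand `1 / (n_free * φ(n_power))` extended by zero to integers that are not `k`-free. -/
noncomputable def kfreeSummand (k n : ℕ) : ℝ :=
  if n ≠ 0 ∧ KFree k n then
    (1 : ℝ) / ((freePart (k - 1) n * Nat.totient (powerPart (k - 1) n) : ℕ) : ℝ) else 0

lemma kfreeSummand_one {k : ℕ} (hk : k ≠ 0) : kfreeSummand k 1 = 1 := by
  have h1 : KFree k 1 := fun p hp h => by
    have := Nat.dvd_one.1 h
    exact hp.one_lt.ne' ((Nat.pow_eq_one.1 this).resolve_right hk)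
  simp [kfreeSummand, h1, freePart, powerPart]

lemma kfreeSummand_mul_of_coprime {k m n : ℕ} (hk : k ≠ 0) (h : m.Coprime n) :
    kfreeSummand k (m * n) = kfreeSummand k m * kfreeSummand k n := by
  unfold kfreeSummand
  rw [kFree_mul_iff_of_coprime hk h]
  by_cases hm : m ≠ 0 ∧ KFree k m
  · by_cases hn : n ≠ 0 ∧ KFree k n
    · have hc : (powerPart (k - 1) m).Coprime (powerPart (k - 1) n) :=
        (h.coprime_dvd_left (powerPart_dvd _ hm.1)).coprime_dvd_right (powerPart_dvd _ hn.1)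
      rw [if_pos hm, if_pos hn, if_pos ⟨mul_ne_zero hm.1 hn.1, hm.2, hn.2⟩,
        freePart_mul_of_coprime h, powerPart_mul_of_coprime h, Nat.totient_mul hc,
        div_mul_div_comm, one_mul]
      push_cast
      ring
    · rw [if_neg hn, if_neg, mul_zero]
      rintro ⟨h1, h2, h3⟩
      exact hn ⟨(mul_ne_zero_iff.1 h1).2, h3⟩
  · rw [if_neg hm, if_neg, zero_mul]
    rintro ⟨h1, h2, h3⟩
    exact hm ⟨(mul_ne_zero_iff.1 h1).1, h2⟩

lemma kfreeSummand_prime_pow_of_le {k p e : ℕ} (hk : k ≠ 0) (hp : p.Prime) (he : k ≤ e) :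
    kfreeSummand k (p ^ e) = 0 := by
  rw [kfreeSummand, if_neg]
  rw [kFree_prime_pow_iff hk hp]
  omega

lemma tsum_kfreeSummand_prime_pow {k p : ℕ} (hk : 2 ≤ k) (hp : p.Prime) :
    ∑' e : ℕ, kfreeSummand k (p ^ e) = (1 - 1 / (p : ℝ))⁻¹ := by
  have hp1 : (1 : ℝ) < p := by exact_mod_cast hp.one_lt
  have hp0 : (0 : ℝ) < p := by linarith
  obtain ⟨m, rfl⟩ : ∃ m, k = m + 2 := ⟨k - 2, by omega⟩
  rw [tsum_eq_sum (s := Finset.range (m + 2)) fun e he =>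
    kfreeSummand_prime_pow_of_le (by omega) hp (by simpa using he), Finset.sum_range_succ]
  have h1 : ∀ e ∈ Finset.range (m + 1), kfreeSummand (m + 2) (p ^ e) = (1 / (p : ℝ)) ^ e := by
    intro e he
    have he : e < m + 1 := by simpa using he
    rw [kfreeSummand, if_pos ⟨(pow_pos hp.pos _).ne', (kFree_prime_pow_iff (by omega) hp).2
      (by omega)⟩, freePart_prime_pow _ hp, powerPart_prime_pow _ hp]
    have e1 : m + 2 - 1 = m + 1 := rfl
    rw [e1, Nat.mod_eq_of_lt he, Nat.div_eq_of_lt he]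
    simp
  have h2 : kfreeSummand (m + 2) (p ^ (m + 1)) = 1 / ((p : ℝ) ^ m * (p - 1)) := by
    rw [kfreeSummand, if_pos ⟨(pow_pos hp.pos _).ne', (kFree_prime_pow_iff (by omega) hp).2
      (by omega)⟩, freePart_prime_pow _ hp, powerPart_prime_pow _ hp]
    have e1 : m + 2 - 1 = m + 1 := rfl
    rw [e1, Nat.mod_self, Nat.div_self (by omega), mul_one, Nat.totient_prime_pow_succ hp]
    push_cast [Nat.cast_sub hp.one_le]
    simp
  rw [Finset.sum_congr rfl h1, h2, geom_sum_eq (by rw [Ne, div_eq_one_iff_eq hp0.ne']; linarith)]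
  have h3 : (p : ℝ) - 1 ≠ 0 := by linarith
  have h4 : (1 : ℝ) - p ≠ 0 := by linarith
  rw [div_pow, one_pow]
  field_simp
  ring

lemma tsum_kfree_eq_prod {k : ℕ} (hk : 2 ≤ k) (N : ℕ) :
    ∑' n : {n : ℕ // 0 < n ∧ (∀ p : ℕ, p.Prime → p ∣ n → p ≤ N) ∧ KFree k n},
      (1 : ℝ) / ((freePart (k - 1) (n : ℕ) * Nat.totient (powerPart (k - 1) (n : ℕ)) : ℕ) : ℝ) =
    ∏ p ∈ Finset.range (N + 1) with p.Prime, (1 - 1 / (p : ℝ))⁻¹ := by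
  have hk0 : k ≠ 0 := by omega
  have h := (EulerProduct.summable_and_hasSum_factoredNumbers_prod_filter_prime_tsum
    (f := kfreeSummand k) (kfreeSummand_one hk0) (kfreeSummand_mul_of_coprime hk0)
    (fun {p} hp => summable_of_ne_finset_zero (s := Finset.range k) fun e he => by
      rw [kfreeSummand_prime_pow_of_le hk0 hp (by simpa using he), norm_zero])
    (Finset.range (N + 1))).2.tsum_eq
  rw [Finset.prod_congr rfl fun p hp => (tsum_kfreeSummand_prime_pow hk
    (Finset.mem_filter.1 hp).2).symm, ← h, tsum_subtype (Nat.factoredNumbers _) (kfreeSummand k)]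
  set S : Set ℕ := {n : ℕ | 0 < n ∧ (∀ p : ℕ, p.Prime → p ∣ n → p ≤ N) ∧ KFree k n} with hS
  refine (tsum_subtype S fun n => (1 : ℝ) /
    ((freePart (k - 1) n * Nat.totient (powerPart (k - 1) n) : ℕ) : ℝ)).trans ?_
  congr 1
  ext n
  have hf : n ∈ Nat.factoredNumbers (Finset.range (N + 1)) ↔
      n ≠ 0 ∧ ∀ p : ℕ, p.Prime → p ∣ n → p ≤ N := by
    rw [Nat.mem_factoredNumbers_iff_primeFactors_subset]
    refine and_congr_right fun hn0 => ⟨fun h p hp hd => ?_, fun h p hp => ?_⟩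
    · exact Nat.lt_succ_iff.1 (Finset.mem_range.1 (h (hp.mem_primeFactors hd hn0)))
    · exact Finset.mem_range.2 (Nat.lt_succ_iff.2
        (h p (Nat.prime_of_mem_primeFactors hp) (Nat.dvd_of_mem_primeFactors hp)))
  by_cases hn : n ∈ S
  · rw [Set.indicator_of_mem hn, Set.indicator_of_mem (hf.2 ⟨hn.1.ne', hn.2.1⟩), kfreeSummand,
      if_pos ⟨hn.1.ne', hn.2.2⟩]
  · rw [Set.indicator_of_notMem hn]
    by_cases hn' : n ∈ Nat.factoredNumbers (Finset.range (N + 1))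
    · rw [Set.indicator_of_mem hn', kfreeSummand, if_neg]
      rintro ⟨h1, h2⟩
      exact hn ⟨Nat.pos_of_ne_zero h1, (hf.1 hn').2, h2⟩
    · rw [Set.indicator_of_notMem hn']

/-- The logarithm of the Euler factor `(1 - 1 / p)⁻¹`, extended by zero to non-primes. -/
noncomputable def logEulerFactor (n : ℕ) : ℝ :=
  if n.Prime then -Real.log (1 - 1 / (n : ℝ)) else 0

lemma logEulerFactor_of_prime {p : ℕ} (hp : p.Prime) :
    logEulerFactor p = -Real.log (1 - 1 / (p : ℝ)) := if_pos hp

lemma one_div_le_logEulerFactor {p : ℕ} (hp : p.Prime) : 1 / (p : ℝ) ≤ logEulerFactor p := by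
  have hp1 : (1 : ℝ) < p := by exact_mod_cast hp.one_lt
  have h1 : 1 / (p : ℝ) < 1 := by rw [div_lt_one (by linarith)]; exact hp1
  have := Real.log_le_sub_one_of_pos (show 0 < 1 - 1 / (p : ℝ) by linarith)
  rw [logEulerFactor_of_prime hp]
  linarith

lemma logEulerFactor_le {p : ℕ} (hp : p.Prime) : logEulerFactor p ≤ 1 / ((p : ℝ) - 1) := by
  have hp1 : (1 : ℝ) < p := by exact_mod_cast hp.one_lt
  have h1 : 1 / (p : ℝ) < 1 := by rw [div_lt_one (by linarith)]; exact hp1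
  have := Real.one_sub_inv_le_log_of_pos (show 0 < 1 - 1 / (p : ℝ) by linarith)
  rw [logEulerFactor_of_prime hp]
  have h2 : (1 - 1 / (p : ℝ))⁻¹ - 1 = 1 / ((p : ℝ) - 1) := by
    have : (p : ℝ) - 1 ≠ 0 := by linarith
    have : 1 - 1 / (p : ℝ) ≠ 0 := by linarith
    field_simp
    ring
  linarith

lemma logEulerFactor_nonneg (n : ℕ) : 0 ≤ logEulerFactor n := by
  by_cases h : n.Prime
  · exact le_trans (by positivity) (one_div_le_logEulerFactor h)
  · simp [logEulerFactor, h]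

lemma log_factorial_eq_sum (N : ℕ) :
    Real.log (N.factorial) =
      ∑ p ∈ Finset.range (N + 1) with p.Prime, (N.factorial.factorization p : ℝ) * Real.log p := by
  conv_lhs => rw [← Nat.prod_factorization_pow_eq_self N.factorial_ne_zero]
  rw [Finsupp.prod_of_support_subset (s := (Finset.range (N + 1)).filter Nat.Prime)]
  · push_cast
    rw [Real.log_prod]
    · simp
    · intro p hp
      have := (Finset.mem_filter.1 hp).2.pos
      positivity
  · intro p hp
    have hp' : p ∈ N.factorial.primeFactors := by simpa using hp
    have hpp := Nat.prime_of_mem_primeFactors hp'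
    have := (hpp.dvd_factorial).1 (Nat.dvd_of_mem_primeFactors hp')
    simp [hpp]; omega
  · simp

lemma log_sub_one_le_sum_log_div_sub_one {N : ℕ} (hN : N ≠ 0) :
    Real.log N - 1 ≤ ∑ p ∈ Finset.range (N + 1) with p.Prime, Real.log p / ((p : ℝ) - 1) := by
  have hN0 : (0 : ℝ) < N := by exact_mod_cast Nat.pos_of_ne_zero hN
  have h1 := Stirling.le_log_factorial_stirling hN
  have h2 : 0 ≤ Real.log N := Real.log_nonneg (by exact_mod_cast Nat.pos_of_ne_zero hN)
  have h3 : 0 ≤ Real.log (2 * Real.pi) := Real.log_nonneg (by linarith [Real.pi_gt_three])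
  have h4 : Real.log (N.factorial) ≤
      N * ∑ p ∈ Finset.range (N + 1) with p.Prime, Real.log p / ((p : ℝ) - 1) := by
    rw [log_factorial_eq_sum, Finset.mul_sum]
    refine Finset.sum_le_sum fun p hp => ?_
    have hpp := (Finset.mem_filter.1 hp).2
    have hp1 : (1 : ℝ) < p := by exact_mod_cast hpp.one_lt
    have h5 : (N.factorial.factorization p : ℝ) ≤ N / ((p : ℝ) - 1) := by
      have := (Nat.factorization_factorial_le_div_pred hpp N)
      refine le_trans (Nat.cast_le.2 this) (Nat.cast_div_le.trans ?_)
      rw [Nat.cast_sub hpp.one_le, Nat.cast_one]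
    calc _ ≤ N / ((p : ℝ) - 1) * Real.log p :=
          mul_le_mul_of_nonneg_right h5 (Real.log_nonneg hp1.le)
      _ = _ := by ring
  have h5 : N * (Real.log N - 1) ≤
      N * ∑ p ∈ Finset.range (N + 1) with p.Prime, Real.log p / ((p : ℝ) - 1) := by
    linarith
  exact le_of_mul_le_mul_left h5 hN0

lemma sum_log_div_le {N : ℕ} (hN : N ≠ 0) :
    ∑ p ∈ Finset.range (N + 1) with p.Prime, Real.log p / (p : ℝ) ≤ Real.log N + Real.log 4 := by
  have hN0 : (0 : ℝ) < N := by exact_mod_cast Nat.pos_of_ne_zero hN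
  have h1 : Real.log (N.factorial) ≤ N * Real.log N := by
    rw [← Real.log_pow]
    exact Real.log_le_log (by exact_mod_cast N.factorial_pos)
      (by exact_mod_cast Nat.factorial_le_pow N)
  have h2 : ∑ p ∈ Finset.range (N + 1) with p.Prime, Real.log p ≤ Real.log 4 * N := by
    refine le_trans (le_of_eq ?_) (Chebyshev.theta_le_log4_mul_x (Nat.cast_nonneg N))
    rw [Chebyshev.theta_eq_sum_Icc, Nat.floor_natCast]
    refine Finset.sum_congr ?_ fun _ _ => rfl
    ext p
    simp
  have h3 : N * ∑ p ∈ Finset.range (N + 1) with p.Prime, Real.log p / (p : ℝ) -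
      ∑ p ∈ Finset.range (N + 1) with p.Prime, Real.log p ≤ Real.log (N.factorial) := by
    rw [log_factorial_eq_sum, Finset.mul_sum, ← Finset.sum_sub_distrib]
    refine Finset.sum_le_sum fun p hp => ?_
    have hpp := (Finset.mem_filter.1 hp).2
    have hp1 : (1 : ℝ) < p := by exact_mod_cast hpp.one_lt
    have h5 : (N : ℝ) / p - 1 ≤ N.factorial.factorization p := by
      have h6 : N / p ≤ N.factorial.factorization p := by
        rw [Nat.factorization_factorial hpp (b := Nat.log p N + 2) (by omega)]
        refine le_trans (by simp) (Finset.single_le_sum (f := fun i => N / p ^ i)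
          (fun _ _ => Nat.zero_le _) (Finset.mem_Ico.2 ⟨le_refl 1, by omega⟩))
      have h7 : (N : ℝ) / p < (N / p : ℕ) + 1 := by
        rw [div_lt_iff₀ (by linarith)]
        exact_mod_cast Nat.lt_mul_of_div_lt (Nat.lt_succ_self (N / p)) hpp.pos
      have : ((N / p : ℕ) : ℝ) ≤ N.factorial.factorization p := by exact_mod_cast h6
      linarith
    calc _ = ((N : ℝ) / p - 1) * Real.log p := by ring
      _ ≤ _ := mul_le_mul_of_nonneg_right h5 (Real.log_nonneg hp1.le)
  refine le_of_mul_le_mul_left (a := (N : ℝ)) ?_ hN0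
  linarith

lemma log_div_sub_one_sub_log_div_le {p : ℕ} (hp : p.Prime) :
    Real.log p / ((p : ℝ) - 1) - Real.log p / p ≤ 4 * (p : ℝ) ^ (-(3 / 2) : ℝ) := by
  have hp2 : (2 : ℝ) ≤ p := by exact_mod_cast hp.two_le
  have hp0 : (0 : ℝ) < p := by linarith
  have hp1 : (0 : ℝ) < p - 1 := by linarith
  have hlog : Real.log p ≤ 2 * (p : ℝ) ^ (1 / 2 : ℝ) := by
    have := Real.log_le_rpow_div hp0.le (ε := 1 / 2) (by norm_num)
    linarith
  have h1 : (p : ℝ) ^ (-(3 / 2) : ℝ) = (p : ℝ) ^ (1 / 2 : ℝ) / (p : ℝ) ^ 2 := by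
    rw [← Real.rpow_natCast, ← Real.rpow_sub hp0]
    norm_num
  have h2 : Real.log p / ((p : ℝ) - 1) - Real.log p / p = Real.log p / (p * (p - 1)) := by
    field_simp
    ring
  have h3 : 0 ≤ (p : ℝ) ^ (1 / 2 : ℝ) := by positivity
  rw [h1, h2, ← mul_div_assoc, div_le_div_iff₀ (by positivity) (by positivity)]
  calc Real.log p * (p : ℝ) ^ 2 ≤ 2 * (p : ℝ) ^ (1 / 2 : ℝ) * (p : ℝ) ^ 2 := by gcongr
    _ = 2 * (p : ℝ) ^ (1 / 2 : ℝ) * (p * p) := by ring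
    _ ≤ 2 * (p : ℝ) ^ (1 / 2 : ℝ) * (p * (2 * (p - 1))) := by gcongr; linarith
    _ = _ := by ring

lemma exists_abs_sum_log_mul_logEulerFactor_sub_log_le :
    ∃ K : ℝ, ∀ N : ℕ, N ≠ 0 →
      |∑ n ∈ Finset.range (N + 1), Real.log n * logEulerFactor n - Real.log N| ≤ K := by
  have hs : Summable fun n : ℕ => 4 * (n : ℝ) ^ (-(3 / 2) : ℝ) :=
    (Real.summable_nat_rpow.2 (by norm_num)).mul_left 4
  set K₀ := ∑' n : ℕ, 4 * (n : ℝ) ^ (-(3 / 2) : ℝ) with hK₀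
  refine ⟨K₀ + Real.log 4 + 1, fun N hN => ?_⟩
  have hT : ∑ n ∈ Finset.range (N + 1), Real.log n * logEulerFactor n =
      ∑ p ∈ Finset.range (N + 1) with p.Prime, Real.log p * logEulerFactor p := by
    rw [Finset.sum_filter]
    refine Finset.sum_congr rfl fun n _ => ?_
    by_cases h : n.Prime <;> simp [h, logEulerFactor]
  have hlo : ∑ p ∈ Finset.range (N + 1) with p.Prime, Real.log p / (p : ℝ) ≤
      ∑ p ∈ Finset.range (N + 1) with p.Prime, Real.log p * logEulerFactor p := by
    refine Finset.sum_le_sum fun p hp => ?_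
    have hpp := (Finset.mem_filter.1 hp).2
    rw [div_eq_mul_one_div]
    exact mul_le_mul_of_nonneg_left (one_div_le_logEulerFactor hpp)
      (Real.log_nonneg (by exact_mod_cast hpp.one_le))
  have hhi : ∑ p ∈ Finset.range (N + 1) with p.Prime, Real.log p * logEulerFactor p ≤
      ∑ p ∈ Finset.range (N + 1) with p.Prime, Real.log p / ((p : ℝ) - 1) := by
    refine Finset.sum_le_sum fun p hp => ?_
    have hpp := (Finset.mem_filter.1 hp).2
    rw [div_eq_mul_one_div (Real.log p)]
    exact mul_le_mul_of_nonneg_left (logEulerFactor_le hpp)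
      (Real.log_nonneg (by exact_mod_cast hpp.one_le))
  have hdiff : ∑ p ∈ Finset.range (N + 1) with p.Prime, Real.log p / ((p : ℝ) - 1) -
      ∑ p ∈ Finset.range (N + 1) with p.Prime, Real.log p / (p : ℝ) ≤ K₀ := by
    rw [← Finset.sum_sub_distrib]
    refine (Finset.sum_le_sum fun p hp =>
      log_div_sub_one_sub_log_div_le (Finset.mem_filter.1 hp).2).trans ?_
    exact hs.sum_le_tsum _ fun n _ => by positivity
  have h1 := log_sub_one_le_sum_log_div_sub_one hN
  have h2 := sum_log_div_le hN
  have h3 : 0 ≤ Real.log 4 := Real.log_nonneg (by norm_num)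
  rw [hT, abs_le]
  constructor <;> linarith

lemma sum_log_mul_log_log_diff_bounds (n : ℕ) :
    Real.log (n + 2) - Real.log 2 ≤ ∑ i ∈ Finset.range n,
        Real.log (i + 3) * (Real.log (Real.log (i + 3)) - Real.log (Real.log (i + 2))) ∧
      ∑ i ∈ Finset.range n,
        Real.log (i + 3) * (Real.log (Real.log (i + 3)) - Real.log (Real.log (i + 2))) ≤
        Real.log (n + 2) - Real.log 2 + 2 - 2 / (n + 1) := by
  induction n with
  | zero => simp
  | succ n ih =>
    rw [Finset.sum_range_succ]
    push_cast
    have e1 : (n : ℝ) + 1 + 2 = n + 3 := by ring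
    have e2 : (n : ℝ) + 1 + 1 = n + 2 := by ring
    rw [e1, e2]
    have hn : (0 : ℝ) ≤ n := n.cast_nonneg
    set a := Real.log ((n : ℝ) + 2) with ha
    set b := Real.log ((n : ℝ) + 3) with hb
    have ha0 : 1 / 2 ≤ a := by
      have : Real.log 2 ≤ a := Real.log_le_log (by norm_num) (by linarith)
      linarith [Real.log_two_gt_d9]
    have hab : a ≤ b := Real.log_le_log (by linarith) (by linarith)
    have hba : b - a ≤ 1 / (n + 2) := by
      rw [ha, hb, ← Real.log_div (by linarith) (by linarith)]
      refine (Real.log_le_sub_one_of_pos (by positivity)).trans (le_of_eq ?_)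
      field_simp
      ring
    have hb0 : 0 < b := by linarith
    have ha0' : 0 < a := by linarith
    have hlog : Real.log b - Real.log a = Real.log (b / a) :=
      (Real.log_div hb0.ne' ha0'.ne').symm
    have h1 : b - a ≤ b * (Real.log b - Real.log a) := by
      rw [hlog]
      have := Real.one_sub_inv_le_log_of_pos (show 0 < b / a by positivity)
      calc b - a = b * (1 - (b / a)⁻¹) := by field_simp
        _ ≤ _ := mul_le_mul_of_nonneg_left this hb0.le
    have h2 : b * (Real.log b - Real.log a) ≤ (b - a) + 2 * (1 / (n + 2)) ^ 2 := by
      rw [hlog]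
      have := Real.log_le_sub_one_of_pos (show 0 < b / a by positivity)
      have h3 : (b - a) ^ 2 ≤ (1 / ((n : ℝ) + 2)) ^ 2 :=
        pow_le_pow_left₀ (by linarith) hba 2
      calc b * Real.log (b / a) ≤ b * (b / a - 1) := mul_le_mul_of_nonneg_left this hb0.le
        _ = (b - a) + (b - a) ^ 2 / a := by field_simp; ring
        _ ≤ (b - a) + (b - a) ^ 2 / (1 / 2) := by gcongr
        _ ≤ _ := by linarith
    have h4 : 2 * (1 / ((n : ℝ) + 2)) ^ 2 ≤ 2 / (n + 1) - 2 / (n + 2) := by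
      have : 2 / ((n : ℝ) + 1) - 2 / (n + 2) - 2 * (1 / ((n : ℝ) + 2)) ^ 2 =
        2 / ((n + 1) * (n + 2) ^ 2) := by field_simp; ring
      have : 0 ≤ 2 / (((n : ℝ) + 1) * (n + 2) ^ 2) := by positivity
      linarith
    constructor <;> linarith [ih.1, ih.2]

lemma exists_tendsto_sum_logEulerFactor_sub_log_log :
    ∃ C : ℝ, Tendsto (fun N : ℕ => ∑ n ∈ Finset.range (N + 1), logEulerFactor n -
      Real.log (Real.log N)) atTop (nhds C) := by
  obtain ⟨K, hK⟩ := exists_abs_sum_log_mul_logEulerFactor_sub_log_le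
  set d : ℕ → ℝ := fun i => Real.log (Real.log (i + 3)) - Real.log (Real.log (i + 2)) with hd
  set z : ℕ → ℝ := fun i => Real.log (i + 3) * logEulerFactor (i + 3) - Real.log (i + 3) * d i
    with hz
  set f : ℕ → ℝ := fun i => (Real.log (i + 3))⁻¹ with hf
  have hlogpos : ∀ i : ℕ, 0 < Real.log ((i : ℝ) + 3) := fun i =>
    Real.log_pos (by linarith [i.cast_nonneg (α := ℝ)])
  have hfa : Antitone f := fun i j hij => inv_anti₀ (hlogpos i)
    (Real.log_le_log (by positivity) (by have : (i : ℝ) ≤ j := by exact_mod_cast hij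
                                         linarith))
  have hf0 : Tendsto f atTop (nhds 0) :=
    (Real.tendsto_log_atTop.comp
      (tendsto_atTop_add_const_right _ 3 tendsto_natCast_atTop_atTop)).inv_tendsto_atTop
  have hshift : ∀ (F : ℕ → ℝ) (n : ℕ), ∑ i ∈ Finset.range n, F (i + 3) =
      ∑ i ∈ Finset.range (n + 2 + 1), F i - ∑ i ∈ Finset.range 3, F i := by
    intro F n
    rw [show n + 2 + 1 = 3 + n by ring, Finset.sum_range_add]
    simp [add_comm]
  set A := ∑ i ∈ Finset.range 3, Real.log i * logEulerFactor i with hA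
  have hzb : ∀ n, ‖∑ i ∈ Finset.range n, z i‖ ≤ K + |A| + 2 + Real.log 2 := by
    intro n
    have h1 := hK (n + 2) (by omega)
    have h2 := sum_log_mul_log_log_diff_bounds n
    have h3 := hshift (fun i => Real.log i * logEulerFactor i) n
    have h4 : ∑ i ∈ Finset.range n, z i =
        (∑ i ∈ Finset.range (n + 2 + 1), Real.log i * logEulerFactor i - A) -
          ∑ i ∈ Finset.range n, Real.log (i + 3) * d i := by
      rw [hz, Finset.sum_sub_distrib, ← h3]
      push_cast
      rfl
    have h5 : 0 ≤ 2 / ((n : ℝ) + 1) := by positivity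
    have h6 : 0 ≤ Real.log 2 := Real.log_nonneg (by norm_num)
    rw [h4, Real.norm_eq_abs]
    push_cast at h1
    rw [abs_le] at h1 ⊢
    have h7 := neg_abs_le A
    have h8 := le_abs_self A
    simp only [hd]
    constructor <;> linarith [h2.1, h2.2]
  obtain ⟨L, hL⟩ := cauchySeq_tendsto_of_complete
    (hfa.cauchySeq_series_mul_of_tendsto_zero_of_bounded hf0 hzb)
  set A' := ∑ i ∈ Finset.range 3, logEulerFactor i with hA'
  refine ⟨L + A' - Real.log (Real.log 2), ?_⟩
  rw [← tendsto_add_atTop_iff_nat 2]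
  refine ((hL.add_const A').sub_const (Real.log (Real.log 2))).congr fun n => ?_
  have h1 : ∑ i ∈ Finset.range n, f i • z i = ∑ i ∈ Finset.range n, logEulerFactor (i + 3) -
      ∑ i ∈ Finset.range n, d i := by
    rw [← Finset.sum_sub_distrib]
    refine Finset.sum_congr rfl fun i _ => ?_
    have := (hlogpos i).ne'
    simp only [hf, hz, smul_eq_mul]
    field_simp
  have h2 : ∑ i ∈ Finset.range n, d i = Real.log (Real.log (n + 2)) - Real.log (Real.log 2) := by
    have := Finset.sum_range_sub (fun i : ℕ => Real.log (Real.log ((i : ℝ) + 2))) n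
    simp only [Nat.cast_zero, zero_add] at this
    rw [← this]
    refine Finset.sum_congr rfl fun i _ => ?_
    simp only [hd]
    push_cast
    rw [show (i : ℝ) + 1 + 2 = i + 3 by ring]
  rw [h1, h2, hshift]
  push_cast
  ring

open MeasureTheory in
lemma integrableOn_log_mul_exp_neg :
    IntegrableOn (fun t : ℝ => Real.log t * Real.exp (-t)) (Set.Ioi 0) := by
  have h := (mellin_hasDerivAt_of_isBigO_rpow (E := ℂ) (f := fun t : ℝ => ((Real.exp (-t) : ℝ) : ℂ))
    (s := 1) (a := 2) (b := 0) ?_ ?_ (by norm_num) ?_ (by norm_num)).1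
  · have h' := h.re
    refine IntegrableOn.congr_fun h' (fun t _ => ?_) measurableSet_Ioi
    simp only [sub_self, Complex.cpow_zero, one_smul]
    rw [Complex.real_smul, ← Complex.ofReal_mul]
    rfl
  · refine (Continuous.continuousOn ?_).locallyIntegrableOn measurableSet_Ioi
    fun_prop
  · rw [← Asymptotics.isBigO_norm_left]
    simp_rw [Complex.norm_real, Asymptotics.isBigO_norm_left]
    simpa only [neg_one_mul] using (isLittleO_exp_neg_mul_rpow_atTop zero_lt_one (-2)).isBigO
  · simp_rw [neg_zero, Real.rpow_zero]
    refine Asymptotics.isBigO_const_of_tendsto (y := (1 : ℂ)) ?_ one_ne_zero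
    have hc : Continuous fun t : ℝ => ((Real.exp (-t) : ℝ) : ℂ) := by fun_prop
    simpa using (hc.tendsto 0).mono_left nhdsWithin_le_nhds

open MeasureTheory in
lemma integral_log_mul_exp_neg :
    ∫ t in Set.Ioi (0 : ℝ), Real.log t * Real.exp (-t) = -Real.eulerMascheroniConstant := by
  have h1 := Complex.hasDerivAt_GammaIntegral (s := 1) (by norm_num)
  have h2 : HasDerivAt Complex.GammaIntegral (-(Real.eulerMascheroniConstant : ℂ)) 1 := by
    refine Complex.hasDerivAt_Gamma_one.congr_of_eventuallyEq ?_
    have : IsOpen {s : ℂ | 0 < s.re} := Complex.continuous_re.isOpen_preimage _ isOpen_Ioi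
    filter_upwards [this.mem_nhds (show (0 : ℝ) < (1 : ℂ).re by norm_num)] with a ha
      using (Complex.Gamma_eq_integral ha).symm
  have h3 := h1.unique h2
  have h4 : ((∫ t in Set.Ioi (0 : ℝ), Real.log t * Real.exp (-t) : ℝ) : ℂ) =
      ((-Real.eulerMascheroniConstant : ℝ) : ℂ) := by
    rw [Complex.ofReal_neg, ← h3, ← integral_complex_ofReal]
    refine setIntegral_congr_fun measurableSet_Ioi fun t _ => ?_
    simp
  exact_mod_cast h4

lemma tsum_neg_log_one_sub_rpow_eq {s : ℝ} (hs : 1 < s) :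
    ∑' p : Nat.Primes, -Real.log (1 - ((p : ℕ) : ℝ) ^ (-s)) =
      Real.log (riemannZeta (s : ℂ)).re := by
  have h := riemannZeta_eulerProduct_exp_log (s := (s : ℂ)) (by simpa using hs)
  have h1 : ∀ p : Nat.Primes, -Complex.log (1 - ((p : ℕ) : ℂ) ^ (-(s : ℂ))) =
      ((-Real.log (1 - ((p : ℕ) : ℝ) ^ (-s)) : ℝ) : ℂ) := by
    intro p
    have hp : (1 : ℝ) < (p : ℕ) := by exact_mod_cast p.2.one_lt
    have h2 : ((p : ℕ) : ℝ) ^ (-s) < 1 := Real.rpow_lt_one_of_one_lt_of_neg hp (by linarith)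
    rw [Complex.ofReal_neg, Complex.ofReal_log (by linarith), Complex.ofReal_sub,
      Complex.ofReal_cpow (by linarith)]
    simp
  rw [tsum_congr h1, ← Complex.ofReal_tsum, ← Complex.ofReal_exp] at h
  rw [← h, Complex.ofReal_re, Real.log_exp]

lemma tendsto_tsum_neg_log_add_log :
    Tendsto (fun δ : ℝ => ∑' p : Nat.Primes, -Real.log (1 - ((p : ℕ) : ℝ) ^ (-(1 + δ))) +
      Real.log δ) (nhdsWithin 0 (Set.Ioi 0)) (nhds 0) := by
  have h := log_riemannZeta_add_log_sub_isLittleO_ofReal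
  rw [Asymptotics.isLittleO_one_iff] at h
  have h1 : Tendsto (fun δ : ℝ => 1 + δ) (nhdsWithin 0 (Set.Ioi 0)) (nhdsWithin 1 (Set.Ioi 1)) := by
    refine tendsto_nhdsWithin_iff.2 ⟨?_, ?_⟩
    · have : Tendsto (fun δ : ℝ => 1 + δ) (nhds 0) (nhds (1 + 0)) :=
        (continuous_const.add continuous_id).tendsto 0
      rw [add_zero] at this
      exact this.mono_left nhdsWithin_le_nhds
    · filter_upwards [self_mem_nhdsWithin] with δ hδ
      simpa using hδ
  refine (h.comp h1).congr' ?_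
  filter_upwards [self_mem_nhdsWithin] with δ hδ
  have hδ : 0 < δ := hδ
  rw [tsum_neg_log_one_sub_rpow_eq (by linarith), Function.comp_apply]
  simp

lemma abs_mul_neg_log_sub_neg_log_le {x y : ℝ} (hx : 0 < x) (hx2 : x ≤ 1 / 2) (hy : 0 < y)
    (hy1 : y ≤ 1) :
    |-Real.log (1 - x) * y - -Real.log (1 - x * y)| ≤ 2 * x ^ 2 ∧
      |-Real.log (1 - x * y)| ≤ 2 * (x * y) := by
  have hxy : x * y ≤ x := by nlinarith
  have hxy0 : 0 < x * y := by positivity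
  have h1 := Real.log_le_sub_one_of_pos (show 0 < 1 - x by linarith)
  have h2 := Real.one_sub_inv_le_log_of_pos (show 0 < 1 - x by linarith)
  have h3 := Real.log_le_sub_one_of_pos (show 0 < 1 - x * y by linarith)
  have h4 := Real.one_sub_inv_le_log_of_pos (show 0 < 1 - x * y by linarith)
  have key : ∀ t : ℝ, 0 < t → t ≤ 1 / 2 → (1 - t)⁻¹ ≤ 1 + t + 2 * t ^ 2 := by
    intro t ht ht2
    rw [inv_le_iff_one_le_mul₀ (by linarith)]
    nlinarith [mul_nonneg (sq_nonneg t) (by linarith : (0 : ℝ) ≤ 1 - 2 * t)]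
  have k1 := key x hx hx2
  have k2 := key (x * y) hxy0 (by linarith)
  have hsq : (x * y) ^ 2 ≤ x ^ 2 := pow_le_pow_left₀ hxy0.le hxy 2
  have hsq2 : (x * y) ^ 2 ≤ 1 / 2 * (x * y) := by nlinarith
  set u := -Real.log (1 - x) with hu
  set w := -Real.log (1 - x * y) with hw
  have u1 : x ≤ u := by linarith
  have u2 : u ≤ x + 2 * x ^ 2 := by linarith
  have w1 : x * y ≤ w := by linarith
  have w2 : w ≤ x * y + 2 * (x * y) ^ 2 := by linarith
  have v1 : x * y ≤ u * y := mul_le_mul_of_nonneg_right u1 hy.le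
  have v2 : u * y ≤ (x + 2 * x ^ 2) * y := mul_le_mul_of_nonneg_right u2 hy.le
  have v3 : x ^ 2 * y ≤ x ^ 2 := by nlinarith [sq_nonneg x]
  refine ⟨abs_le.2 ⟨by linarith, by linarith⟩, abs_le.2 ⟨by linarith, by linarith⟩⟩

lemma tendsto_tsum_logEulerFactor_mul_rpow_add_log :
    (∀ δ : ℝ, 0 < δ → Summable fun n : ℕ => logEulerFactor n * (n : ℝ) ^ (-δ)) ∧
    Tendsto (fun δ : ℝ => ∑' n : ℕ, logEulerFactor n * (n : ℝ) ^ (-δ) + Real.log δ)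
      (nhdsWithin 0 (Set.Ioi 0)) (nhds 0) := by
  have hbound : ∀ δ : ℝ, 0 < δ → ∀ p : Nat.Primes,
      |logEulerFactor p * ((p : ℕ) : ℝ) ^ (-δ) - -Real.log (1 - ((p : ℕ) : ℝ) ^ (-(1 + δ)))| ≤
        2 * ((p : ℕ) : ℝ) ^ (-2 : ℝ) ∧
      |-Real.log (1 - ((p : ℕ) : ℝ) ^ (-(1 + δ)))| ≤ 2 * ((p : ℕ) : ℝ) ^ (-(1 + δ)) := by
    intro δ hδ p
    have hp2 : (2 : ℝ) ≤ (p : ℕ) := by exact_mod_cast p.2.two_le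
    have hp0 : (0 : ℝ) < (p : ℕ) := by linarith
    have e1 : ((p : ℕ) : ℝ) ^ (-(1 + δ)) = 1 / ((p : ℕ) : ℝ) * ((p : ℕ) : ℝ) ^ (-δ) := by
      rw [neg_add, Real.rpow_add hp0, Real.rpow_neg_one, one_div]
    have e2 : ((p : ℕ) : ℝ) ^ (-2 : ℝ) = (1 / ((p : ℕ) : ℝ)) ^ 2 := by
      rw [Real.rpow_neg hp0.le, one_div, inv_pow, ← Real.rpow_natCast]
      norm_num
    rw [e1, e2, logEulerFactor_of_prime p.2]
    exact abs_mul_neg_log_sub_neg_log_le (by positivity)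
      (one_div_le_one_div_of_le (by norm_num) hp2) (by positivity)
      (Real.rpow_le_one_of_one_le_of_nonpos (by linarith) (by linarith))
  have hs2 : Summable fun p : Nat.Primes => 2 * ((p : ℕ) : ℝ) ^ (-2 : ℝ) :=
    (Nat.Primes.summable_rpow.2 (by norm_num)).mul_left 2
  have hsE : ∀ δ : ℝ, 0 < δ →
      Summable fun p : Nat.Primes => -Real.log (1 - ((p : ℕ) : ℝ) ^ (-(1 + δ))) := fun δ hδ =>
    ((Nat.Primes.summable_rpow.2 (by linarith)).mul_left 2).of_norm_bounded
      fun p => (hbound δ hδ p).2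
  have hsD : ∀ δ : ℝ, 0 < δ → Summable fun p : Nat.Primes =>
      logEulerFactor p * ((p : ℕ) : ℝ) ^ (-δ) - -Real.log (1 - ((p : ℕ) : ℝ) ^ (-(1 + δ))) :=
    fun δ hδ => hs2.of_norm_bounded fun p => (hbound δ hδ p).1
  have hsF : ∀ δ : ℝ, 0 < δ → Summable fun p : Nat.Primes =>
      logEulerFactor p * ((p : ℕ) : ℝ) ^ (-δ) := fun δ hδ =>
    ((hsD δ hδ).add (hsE δ hδ)).congr fun p => by ring
  have hind : ∀ δ : ℝ, (Set.ofPred Nat.Prime).indicator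
      (fun n : ℕ => logEulerFactor n * (n : ℝ) ^ (-δ)) =
        fun n : ℕ => logEulerFactor n * (n : ℝ) ^ (-δ) := by
    intro δ
    refine Set.indicator_eq_self.2 fun n hn => ?_
    by_contra h
    have h : ¬ n.Prime := h
    exact hn (by simp [logEulerFactor, h])
  refine ⟨fun δ hδ => ?_, ?_⟩
  · rw [← hind δ]
    exact summable_subtype_iff_indicator.1 (hsF δ hδ)
  have hlim : Tendsto (fun δ : ℝ => ∑' p : Nat.Primes,
      (logEulerFactor p * ((p : ℕ) : ℝ) ^ (-δ) - -Real.log (1 - ((p : ℕ) : ℝ) ^ (-(1 + δ)))))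
      (nhdsWithin 0 (Set.Ioi 0)) (nhds (∑' _ : Nat.Primes, (0 : ℝ))) := by
    refine tendsto_tsum_of_dominated_convergence hs2 (fun p => ?_) ?_
    · have hp2 : (2 : ℝ) ≤ (p : ℕ) := by exact_mod_cast p.2.two_le
      have hp0 : ((p : ℕ) : ℝ) ≠ 0 := by linarith
      have hq : ((p : ℕ) : ℝ)⁻¹ ≤ 2⁻¹ := inv_anti₀ (by norm_num) hp2
      have hc : ContinuousAt (fun δ : ℝ => logEulerFactor p * ((p : ℕ) : ℝ) ^ (-δ) -
          -Real.log (1 - ((p : ℕ) : ℝ) ^ (-(1 + δ)))) 0 := by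
        have c1 : Continuous fun δ : ℝ => ((p : ℕ) : ℝ) ^ (-δ) :=
          Real.continuous_const_rpow hp0 |>.comp continuous_neg
        have c2 : Continuous fun δ : ℝ => ((p : ℕ) : ℝ) ^ (-(1 + δ)) :=
          Real.continuous_const_rpow hp0 |>.comp (by fun_prop)
        refine (c1.continuousAt.const_mul _).sub (ContinuousAt.neg (ContinuousAt.log
          (continuousAt_const.sub c2.continuousAt) ?_))
        rw [add_zero, Real.rpow_neg_one]
        linarith
      have := hc.tendsto
      simp only [neg_zero, Real.rpow_zero, mul_one, add_zero, Real.rpow_neg_one,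
        logEulerFactor_of_prime p.2, one_div, sub_self] at this
      simp only [logEulerFactor_of_prime p.2, one_div]
      exact this.mono_left nhdsWithin_le_nhds
    · filter_upwards [self_mem_nhdsWithin] with δ hδ p
      exact (hbound δ hδ p).1
  rw [tsum_zero] at hlim
  have := hlim.add tendsto_tsum_neg_log_add_log
  rw [add_zero] at this
  refine this.congr' ?_
  filter_upwards [self_mem_nhdsWithin] with δ hδ
  rw [(hsF δ hδ).tsum_sub (hsE δ hδ), ← hind δ]
  have : ∑' n : ℕ, (Set.ofPred Nat.Prime).indicator
      (fun n : ℕ => logEulerFactor n * (n : ℝ) ^ (-δ)) n =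
      ∑' p : Nat.Primes, logEulerFactor p * ((p : ℕ) : ℝ) ^ (-δ) :=
    (tsum_subtype (Set.ofPred Nat.Prime) fun n : ℕ => logEulerFactor n * (n : ℝ) ^ (-δ)).symm
  rw [this]
  ring

lemma tendsto_log_log_floor_exp_sub_log :
    Tendsto (fun u : ℝ => Real.log (Real.log ⌊Real.exp u⌋₊) - Real.log u) atTop (nhds 0) := by
  have h1 : Tendsto (fun u : ℝ => Real.log ⌊Real.exp u⌋₊ - u) atTop (nhds 0) := by
    have h := ((tendsto_nat_floor_div_atTop (R := ℝ)).comp Real.tendsto_exp_atTop).log one_ne_zero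
    rw [Real.log_one] at h
    refine h.congr' ?_
    filter_upwards [eventually_ge_atTop 0] with u hu
    have h2 : 0 < ⌊Real.exp u⌋₊ := Nat.floor_pos.2 (Real.one_le_exp hu)
    simp only [Function.comp]
    rw [Real.log_div (by exact_mod_cast h2.ne') (Real.exp_pos u).ne', Real.log_exp]
  have h2 : Tendsto (fun u : ℝ => Real.log ⌊Real.exp u⌋₊ / u) atTop (nhds 1) := by
    have h := (h1.mul tendsto_inv_atTop_zero).add_const 1
    simp only [mul_zero, zero_add] at h
    refine h.congr' ?_
    filter_upwards [eventually_gt_atTop 0] with u hu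
    field_simp
    ring
  have h3 := h2.log one_ne_zero
  rw [Real.log_one] at h3
  refine h3.congr' ?_
  filter_upwards [eventually_ge_atTop 1] with u hu
  have h4 : (1 : ℝ) < ⌊Real.exp u⌋₊ := by
    have : 2 ≤ ⌊Real.exp u⌋₊ := by
      apply Nat.le_floor
      have := Real.add_one_le_exp u
      push_cast
      linarith
    exact_mod_cast this
  rw [Real.log_div (Real.log_pos h4).ne' (by positivity)]

lemma tendsto_sum_range_floor_exp_sub_log {C : ℝ} {a : ℕ → ℝ}
    (h : Tendsto (fun N : ℕ => ∑ n ∈ Finset.range (N + 1), a n - Real.log (Real.log N))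
      atTop (nhds C)) :
    Tendsto (fun u : ℝ => ∑ n ∈ Finset.range (⌊Real.exp u⌋₊ + 1), a n - Real.log u)
      atTop (nhds C) := by
  have h1 := (h.comp (tendsto_nat_floor_atTop.comp Real.tendsto_exp_atTop)).add
    tendsto_log_log_floor_exp_sub_log
  rw [add_zero] at h1
  refine h1.congr fun u => ?_
  simp only [Function.comp]
  ring

open MeasureTheory in
lemma tsum_logEulerFactor_mul_rpow_eq_integral {δ : ℝ} (hδ : 0 < δ) :
    ∑' n : ℕ, logEulerFactor n * (n : ℝ) ^ (-δ) =
      ∫ v in Set.Ioi 0,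
        (∑ n ∈ Finset.range (⌊Real.exp (v / δ)⌋₊ + 1), logEulerFactor n) * Real.exp (-v) := by
  set F : ℕ → ℝ → ℝ := fun n =>
    (Set.Ici (δ * Real.log n)).indicator fun v => logEulerFactor n * Real.exp (-v) with hF
  have hzero : ∀ {n : ℕ}, ¬ n.Prime → logEulerFactor n = 0 := fun h => if_neg h
  have hF0 : ∀ n v, 0 ≤ F n v := fun n v =>
    Set.indicator_nonneg (fun v _ => mul_nonneg (logEulerFactor_nonneg n) (Real.exp_pos _).le) v
  have hFint : ∀ n, IntegrableOn (F n) (Set.Ioi 0) := fun n =>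
    ((integrableOn_exp_neg_Ioi 0).const_mul (logEulerFactor n)).indicator measurableSet_Ici
  have hval : ∀ n, ∫ v in Set.Ioi 0, F n v = logEulerFactor n * (n : ℝ) ^ (-δ) := by
    intro n
    by_cases hn : n.Prime
    · have hpos : 0 < δ * Real.log n := mul_pos hδ (Real.log_pos (by exact_mod_cast hn.one_lt))
      have hset : Set.Ioi (0 : ℝ) ∩ Set.Ici (δ * Real.log n) = Set.Ici (δ * Real.log n) :=
        Set.inter_eq_right.2 fun x hx => lt_of_lt_of_le hpos hx
      rw [hF, setIntegral_indicator measurableSet_Ici, hset, integral_Ici_eq_integral_Ioi,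
        integral_const_mul, integral_exp_neg_Ioi,
        Real.rpow_def_of_pos (by exact_mod_cast hn.pos)]
      congr 2
      ring
    · simp [hF, hzero hn]
  have hsum := hasSum_integral_of_summable_integral_norm (μ := volume.restrict (Set.Ioi 0)) hFint
    (by
      simp_rw [Real.norm_of_nonneg (hF0 _ _), hval]
      exact tendsto_tsum_logEulerFactor_mul_rpow_add_log.1 δ hδ)
  simp_rw [hval] at hsum
  rw [hsum.tsum_eq]
  refine setIntegral_congr_fun measurableSet_Ioi fun v _ => ?_
  have hiff : ∀ n : ℕ, n.Prime → (n < ⌊Real.exp (v / δ)⌋₊ + 1 ↔ δ * Real.log n ≤ v) := by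
    intro n hn
    have hn0 : (0 : ℝ) < n := by exact_mod_cast hn.pos
    rw [Nat.lt_succ_iff, Nat.le_floor_iff (Real.exp_pos _).le, ← Real.log_le_iff_le_exp hn0,
      le_div_iff₀ hδ, mul_comm]
  rw [tsum_eq_sum (s := Finset.range (⌊Real.exp (v / δ)⌋₊ + 1)), Finset.sum_mul]
  · refine Finset.sum_congr rfl fun n hn => ?_
    by_cases hp : n.Prime
    · exact Set.indicator_of_mem ((hiff n hp).1 (Finset.mem_range.1 hn)) _
    · simp [hF, hzero hp]
  · intro n hn
    by_cases hp : n.Prime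
    · exact Set.indicator_of_notMem (fun h => hn (Finset.mem_range.2 ((hiff n hp).2 h))) _
    · simp [hF, hzero hp]

/-- If `S u - log u → C` with `S` monotone, then `S (v / δ) - log (v / δ)` is dominated. -/
lemma exists_abs_sub_log_div_le {S : ℝ → ℝ} (hS0 : ∀ u, 0 ≤ S u) (hS : Monotone S) {C : ℝ}
    (h : Tendsto (fun u => S u - Real.log u) atTop (nhds C)) :
    ∃ K : ℝ, ∀ δ v : ℝ, 0 < δ → δ < 1 → 0 < v →
      |S (v / δ) - Real.log (v / δ)| ≤ K + |Real.log v| := by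
  have hev : ∀ᶠ u in atTop, |S u - Real.log u| < |C| + 1 :=
    h.abs.eventually (gt_mem_nhds (lt_add_one _))
  obtain ⟨U, hU⟩ := eventually_atTop.1 hev
  refine ⟨|C| + 1 + S U + |Real.log U|, fun δ v hδ hδ1 hv => ?_⟩
  have hvd : v ≤ v / δ := by rw [le_div_iff₀ hδ]; nlinarith
  rcases le_or_gt U (v / δ) with hc | hc
  · have := hU _ hc
    have := hS0 U
    have := abs_nonneg (Real.log U)
    have := abs_nonneg (Real.log v)
    linarith
  · have h1 : Real.log v ≤ Real.log (v / δ) := Real.log_le_log hv hvd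
    have h2 : Real.log (v / δ) ≤ Real.log U := Real.log_le_log (by positivity) hc.le
    have h3 := hS hc.le
    have h4 := hS0 (v / δ)
    have := abs_nonneg C
    have := abs_nonneg (Real.log U)
    have := abs_nonneg (Real.log v)
    have := le_abs_self (Real.log U)
    have := neg_abs_le (Real.log v)
    have := neg_abs_le (Real.log U)
    have := le_abs_self (Real.log v)
    rw [abs_le]
    constructor <;> linarith

open MeasureTheory in
lemma tendsto_integral_comp_div_mul_exp_neg_add_log {S : ℝ → ℝ} (hS0 : ∀ u, 0 ≤ S u)
    (hS : Monotone S) {C : ℝ} (h : Tendsto (fun u => S u - Real.log u) atTop (nhds C)) :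
    Tendsto (fun δ => (∫ v in Set.Ioi 0, S (v / δ) * Real.exp (-v)) + Real.log δ)
      (nhdsWithin 0 (Set.Ioi 0)) (nhds (C - Real.eulerMascheroniConstant)) := by
  obtain ⟨K, hK⟩ := exists_abs_sub_log_div_le hS0 hS h
  have hexp := integrableOn_exp_neg_Ioi 0
  have hlog := integrableOn_log_mul_exp_neg
  have hbd : IntegrableOn (fun v => (K + |Real.log v|) * Real.exp (-v)) (Set.Ioi 0) := by
    refine ((hexp.const_mul K).add hlog.norm).congr (ae_of_all _ fun v => ?_)
    simp only [Pi.add_apply, norm_mul, Real.norm_eq_abs, Real.abs_exp]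
    ring
  have hmeas : ∀ δ : ℝ, Measurable fun v => (S (v / δ) - Real.log (v / δ)) * Real.exp (-v) := by
    intro δ
    have := hS.measurable
    fun_prop
  have hle : ∀ δ : ℝ, 0 < δ → δ < 1 → ∀ᵐ v ∂volume.restrict (Set.Ioi (0 : ℝ)),
      ‖(S (v / δ) - Real.log (v / δ)) * Real.exp (-v)‖ ≤ (K + |Real.log v|) * Real.exp (-v) := by
    intro δ hδ hδ1
    filter_upwards [ae_restrict_mem measurableSet_Ioi] with v hv
    rw [norm_mul, Real.norm_eq_abs, Real.norm_eq_abs, Real.abs_exp]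
    exact mul_le_mul_of_nonneg_right (hK δ v hδ hδ1 hv) (Real.exp_pos _).le
  have hsmall : ∀ᶠ δ : ℝ in nhdsWithin 0 (Set.Ioi 0), 0 < δ ∧ δ < 1 :=
    (eventually_mem_nhdsWithin).and (mem_nhdsWithin_of_mem_nhds (Iio_mem_nhds one_pos))
  have hlim : Tendsto (fun δ => ∫ v in Set.Ioi 0,
      (S (v / δ) - Real.log (v / δ)) * Real.exp (-v)) (nhdsWithin 0 (Set.Ioi 0))
      (nhds (∫ v in Set.Ioi 0, C * Real.exp (-v))) := by
    refine tendsto_integral_filter_of_dominated_convergence _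
      (.of_forall fun δ => (hmeas δ).aestronglyMeasurable)
      (hsmall.mono fun δ hδ => hle δ hδ.1 hδ.2) hbd ?_
    filter_upwards [ae_restrict_mem measurableSet_Ioi] with v hv
    refine Tendsto.mul_const _ (h.comp ?_)
    exact tendsto_inv_nhdsGT_zero.const_mul_atTop hv
  rw [integral_const_mul, integral_exp_neg_Ioi_zero, mul_one] at hlim
  refine (hlim.sub_const Real.eulerMascheroniConstant).congr' ?_
  filter_upwards [hsmall] with δ hδ
  have hI := hbd.mono' (hmeas δ).aestronglyMeasurable (hle δ hδ.1 hδ.2)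
  have hsplit : ∫ v in Set.Ioi 0, S (v / δ) * Real.exp (-v) =
      ∫ v in Set.Ioi 0, ((S (v / δ) - Real.log (v / δ)) * Real.exp (-v) +
        (Real.log v * Real.exp (-v) - Real.log δ * Real.exp (-v))) := by
    refine setIntegral_congr_fun measurableSet_Ioi fun v hv => ?_
    rw [Real.log_div (ne_of_gt hv) hδ.1.ne']
    ring
  have hlog' : IntegrableOn (fun v => Real.log v * Real.exp (-v) - Real.log δ * Real.exp (-v))
      (Set.Ioi 0) := hlog.sub (hexp.const_mul _)
  rw [hsplit, integral_add hI hlog', integral_sub hlog (hexp.const_mul _),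
    integral_log_mul_exp_neg, integral_const_mul, integral_exp_neg_Ioi_zero]
  ring

/-- **Mertens' third theorem**, in logarithmic form. -/
lemma tendsto_sum_logEulerFactor_sub_log_log :
    Tendsto (fun N : ℕ => ∑ n ∈ Finset.range (N + 1), logEulerFactor n - Real.log (Real.log N))
      atTop (nhds Real.eulerMascheroniConstant) := by
  obtain ⟨C, hC⟩ := exists_tendsto_sum_logEulerFactor_sub_log_log
  have hmono : Monotone fun u : ℝ =>
      ∑ n ∈ Finset.range (⌊Real.exp u⌋₊ + 1), logEulerFactor n := by
    intro u v huv
    refine Finset.sum_le_sum_of_subset_of_nonneg (Finset.range_mono ?_)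
      fun n _ _ => logEulerFactor_nonneg n
    gcongr
  have h := tendsto_integral_comp_div_mul_exp_neg_add_log
    (fun u => Finset.sum_nonneg fun n _ => logEulerFactor_nonneg n) hmono
    (tendsto_sum_range_floor_exp_sub_log hC)
  have h' := h.congr' (f₂ := fun δ => ∑' n : ℕ, logEulerFactor n * (n : ℝ) ^ (-δ) + Real.log δ) (by
    filter_upwards [self_mem_nhdsWithin] with δ hδ
    rw [tsum_logEulerFactor_mul_rpow_eq_integral hδ])
  have heq := tendsto_nhds_unique h' tendsto_tsum_logEulerFactor_mul_rpow_add_log.2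
  rwa [sub_eq_zero.1 heq] at hC

lemma prod_one_sub_inv_eq_exp (N : ℕ) :
    ∏ p ∈ Finset.range (N + 1) with p.Prime, (1 - 1 / (p : ℝ))⁻¹ =
      Real.exp (∑ n ∈ Finset.range (N + 1), logEulerFactor n) := by
  simp only [logEulerFactor]
  rw [← Finset.sum_filter, Real.exp_sum]
  refine Finset.prod_congr rfl fun p hp => ?_
  have hp1 : (1 : ℝ) < p := by exact_mod_cast (Finset.mem_filter.1 hp).2.one_lt
  have h1 : 1 / (p : ℝ) < 1 := by rw [div_lt_one (by linarith)]; exact hp1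
  rw [Real.exp_neg, Real.exp_log (by linarith)]

/-- **Corollary 1.** For every `k ≥ 2`, the sum over `k`-free positive integers `n` all of whose
prime factors are `≤ N` of `1 / (n_{(k-1)-free} · φ(n_{(k-1)-power}))` is asymptotic to
`e^γ log N` as `N → ∞`. -/
theorem kfree_totient_sum_asymp
    (k : ℕ) (hk : 2 ≤ k) :
    Tendsto
      (fun N : ℕ =>
        (∑' n : {n : ℕ // 0 < n ∧ (∀ p : ℕ, p.Prime → p ∣ n → p ≤ N) ∧ KFree k n},
            (1 : ℝ) / ((freePart (k - 1) (n : ℕ) * Nat.totient (powerPart (k - 1) (n : ℕ)) : ℕ) : ℝ)) /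
          (Real.exp Real.eulerMascheroniConstant * Real.log N))
      atTop (nhds 1) := by
  have h := (tendsto_sum_logEulerFactor_sub_log_log.sub_const Real.eulerMascheroniConstant).rexp
  rw [sub_self, Real.exp_zero] at h
  refine h.congr' ?_
  filter_upwards [eventually_ge_atTop 2] with N hN
  have hlog : 0 < Real.log N := Real.log_pos (by exact_mod_cast hN)
  rw [tsum_kfree_eq_prod hk, prod_one_sub_inv_eq_exp, Real.exp_sub, Real.exp_sub,
    Real.exp_log hlog, div_div, mul_comm (Real.log N)]
end

section
/- As N → ∞, ∑_{squarefree n ≥ 1 : every prime factor of n is ≤ N} 1/φ(n) ∼ e^γ · log N, i.e. the ratio of the two sides tends to 1. -/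
open Filter
open scoped Classical

open Nat in
/-- The sum of `1 / φ n` over the squarefree `N`-smooth numbers is an Euler product. -/
lemma tsum_squarefree_smooth_one_div_totient (N : ℕ) :
    (∑' n : {n : ℕ // 0 < n ∧ (∀ p : ℕ, p.Prime → p ∣ n → p ≤ N) ∧
        ∀ p : ℕ, p.Prime → ¬ p ^ 2 ∣ n}, (1 : ℝ) / (Nat.totient (n : ℕ) : ℝ)) =
      ∏ p ∈ Nat.primesLE N, (1 - (p : ℝ)⁻¹)⁻¹ := by
  let f : ArithmeticFunction ℝ := ⟨fun n => 1 / (φ n : ℝ), by simp⟩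
  have hf : f.IsMultiplicative := by
    refine ArithmeticFunction.IsMultiplicative.iff_ne_zero.2 ⟨by simp [f], ?_⟩
    intro m n _ _ hmn
    simp [f, Nat.totient_mul hmn, mul_comm]
  have hset : {n : ℕ | 0 < n ∧ (∀ p : ℕ, p.Prime → p ∣ n → p ≤ N) ∧
        ∀ p : ℕ, p.Prime → ¬ p ^ 2 ∣ n} = ((primorial N).divisors : Set ℕ) := by
    ext n
    simp only [Set.mem_ofPred_eq, Finset.mem_coe, Nat.mem_divisors]
    constructor
    · rintro ⟨h0, hp, hsq⟩
      have hs : Squarefree n := Nat.squarefree_iff_prime_squarefree.2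
        fun p hpp hd => hsq p hpp (by rwa [pow_two])
      refine ⟨?_, primorial_ne_zero N⟩
      rw [← Nat.prod_primeFactors_of_squarefree hs, primorial_eq_prod_primesLE]
      refine Finset.prod_dvd_prod_of_subset _ _ _ fun p h => ?_
      have := Nat.prime_of_mem_primeFactors h
      exact Nat.mem_primesLE.2 ⟨hp p this (Nat.dvd_of_mem_primeFactors h), this⟩
    · rintro ⟨hd, h0⟩
      refine ⟨Nat.pos_of_dvd_of_pos hd (primorial_pos N),
        fun p hp hpn => (hp.dvd_primorial_iff).1 (hpn.trans hd), fun p hp hpn => ?_⟩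
      have := Nat.squarefree_iff_prime_squarefree.1 (squarefree_primorial N) p hp
      exact this (by rw [← pow_two]; exact hpn.trans hd)
  have h1 := hf.prodPrimeFactors_one_add_of_squarefree (squarefree_primorial N)
  rw [primeFactors_primorial] at h1
  have h2 : (∑' n : ({n : ℕ | 0 < n ∧ (∀ p : ℕ, p.Prime → p ∣ n → p ≤ N) ∧
        ∀ p : ℕ, p.Prime → ¬ p ^ 2 ∣ n} : Set ℕ), f n) = ∑ d ∈ (primorial N).divisors, f d := by
    rw [hset]
    exact Finset.tsum_subtype' _ _
  refine Eq.trans h2 (h1.symm.trans (Finset.prod_congr rfl fun p hp => ?_))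
  have hp' := Nat.prime_of_mem_primesLE hp
  have h3 : (2 : ℝ) ≤ p := by exact_mod_cast hp'.two_le
  have h4 : f p = 1 / ((p : ℝ) - 1) := by
    simp [f, Nat.totient_prime hp', Nat.cast_sub hp'.one_le]
  rw [h4]
  have : (p : ℝ) - 1 ≠ 0 := by linarith
  have : (p : ℝ) ≠ 0 := by linarith
  field_simp
  ring

lemma log_factorial_eq_sum_primesLE (N : ℕ) :
    Real.log (N.factorial : ℝ) =
      ∑ p ∈ Nat.primesLE N, (N.factorial.factorization p : ℝ) * Real.log p := by
  have h : (N.factorial : ℝ) = ∏ p ∈ Nat.primesLE N, (p : ℝ) ^ N.factorial.factorization p := by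
    conv_lhs => rw [← Nat.prod_factorization_pow_eq_self (Nat.factorial_ne_zero N)]
    rw [Finsupp.prod_of_support_subset (s := Nat.primesLE N)]
    · push_cast; rfl
    · intro p hp
      have := Nat.prime_of_mem_primeFactors (Nat.support_factorization _ ▸ hp)
      refine Nat.mem_primesLE.2 ⟨?_, this⟩
      exact (this.dvd_factorial).1 (Nat.dvd_of_mem_primeFactors (Nat.support_factorization _ ▸ hp))
    · simp
  rw [h, Real.log_prod]
  · simp [Real.log_pow]
  · intro p hp
    have := (Nat.prime_of_mem_primesLE hp).ne_zero
    positivity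

lemma summable_log_div_nat_mul_pred : Summable fun n : ℕ => Real.log n / (n * (n - 1 : ℝ)) := by
  have hs : Summable fun n : ℕ => 4 * (n : ℝ) ^ (-(3 / 2) : ℝ) :=
    (Real.summable_nat_rpow.2 (by norm_num)).mul_left 4
  refine Summable.of_norm_bounded_eventually_nat hs ?_
  filter_upwards [eventually_ge_atTop 2] with n hn
  have hn' : (2 : ℝ) ≤ n := by exact_mod_cast hn
  have h0 : (0 : ℝ) < n := by linarith
  have hlog : Real.log n ≤ 2 * (n : ℝ) ^ (1 / 2 : ℝ) := by
    have := Real.log_le_rpow_div h0.le (ε := 1 / 2) (by norm_num)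
    linarith
  have hlog0 : 0 ≤ Real.log n := Real.log_nonneg (by linarith)
  rw [Real.norm_of_nonneg (div_nonneg hlog0 (mul_nonneg h0.le (by linarith)))]
  rw [div_le_iff₀ (mul_pos h0 (by linarith))]
  have h2 : (n : ℝ) ^ (-(3 / 2) : ℝ) * (n * n) = (n : ℝ) ^ (1 / 2 : ℝ) := by
    have : (n : ℝ) * n = (n : ℝ) ^ (2 : ℝ) := by rw [Real.rpow_two]; ring
    rw [this, ← Real.rpow_add h0]; norm_num
  have h3 : 0 ≤ (n : ℝ) ^ (-(3 / 2) : ℝ) * n := by positivity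
  nlinarith

/-- Mertens' first theorem. -/
lemma exists_abs_sum_primesLE_log_div_sub_log_le :
    ∃ B : ℝ, ∀ N : ℕ, |∑ p ∈ Nat.primesLE N, Real.log p / p - Real.log N| ≤ B := by
  set K := ∑' n : ℕ, |Real.log n / (n * (n - 1 : ℝ))| with hK
  have hK0 : 0 ≤ K := tsum_nonneg fun _ => abs_nonneg _
  refine ⟨max (Real.log 4) (1 + K), fun N => ?_⟩
  rcases Nat.eq_zero_or_pos N with rfl | hN
  · simp; right; positivity
  have hN0 : (0 : ℝ) < N := by exact_mod_cast hN
  have hfac := log_factorial_eq_sum_primesLE N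
  have hle : Real.log (N.factorial : ℝ) ≤ N * Real.log N := by
    rw [← Real.log_pow]
    exact Real.log_le_log (by positivity) (by exact_mod_cast Nat.factorial_le_pow N)
  have hge : N * Real.log N - N ≤ Real.log (N.factorial : ℝ) := by
    have h1 : (N : ℝ) ^ N / N.factorial ≤ Real.exp N := Real.pow_div_factorial_le_exp _ hN0.le _
    rw [div_le_iff₀ (by positivity)] at h1
    have h2 := Real.log_le_log (by positivity) h1
    rw [Real.log_mul (by positivity) (by positivity), Real.log_exp, Real.log_pow] at h2
    linarith
  have hupper : Real.log (N.factorial : ℝ) ≤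
      N * ∑ p ∈ Nat.primesLE N, Real.log p / p + N * K := by
    have h1 : ∑ p ∈ Nat.primesLE N, |Real.log p / (p * (p - 1 : ℝ))| ≤ K :=
      summable_log_div_nat_mul_pred.abs.sum_le_tsum _ fun _ _ => abs_nonneg _
    have h2 : Real.log (N.factorial : ℝ) ≤ ∑ p ∈ Nat.primesLE N,
        (N * (Real.log p / p) + N * |Real.log p / (p * (p - 1 : ℝ))|) := by
      rw [hfac]
      refine Finset.sum_le_sum fun p hp => ?_
      have hp' := Nat.prime_of_mem_primesLE hp
      have hp2 : (2 : ℝ) ≤ p := by exact_mod_cast hp'.two_le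
      have hv : (N.factorial.factorization p : ℝ) ≤ N / (p - 1) := by
        have h := Nat.factorization_factorial_le_div_pred hp' N
        have h' : ((N / (p - 1) : ℕ) : ℝ) ≤ (N : ℝ) / ((p - 1 : ℕ) : ℝ) := Nat.cast_div_le
        rw [Nat.cast_sub hp'.one_le, Nat.cast_one] at h'
        exact le_trans (by exact_mod_cast h) h'
      have hl : 0 ≤ Real.log p := Real.log_nonneg (by linarith)
      calc _ ≤ N / (p - 1) * Real.log p := by gcongr
        _ = N * (Real.log p / p) + N * (Real.log p / (p * (p - 1 : ℝ))) := by
          have : (p : ℝ) - 1 ≠ 0 := by linarith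
          have : (p : ℝ) ≠ 0 := by linarith
          field_simp
          ring
        _ ≤ _ := by gcongr; exact le_abs_self _
    rw [Finset.sum_add_distrib, ← Finset.mul_sum, ← Finset.mul_sum] at h2
    nlinarith
  have hlower : N * ∑ p ∈ Nat.primesLE N, Real.log p / p - Real.log 4 * N ≤
      Real.log (N.factorial : ℝ) := by
    have h1 := Chebyshev.theta_le_log4_mul_x hN0.le
    rw [Chebyshev.theta_eq_sum_primesLE_log] at h1
    have h2 : ∑ p ∈ Nat.primesLE N, (N * (Real.log p / p) - Real.log p) ≤
        Real.log (N.factorial : ℝ) := by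
      rw [hfac]
      refine Finset.sum_le_sum fun p hp => ?_
      have hp' := Nat.prime_of_mem_primesLE hp
      have hp2 : (2 : ℝ) ≤ p := by exact_mod_cast hp'.two_le
      have hl : 0 ≤ Real.log p := Real.log_nonneg (by linarith)
      have hv : (N : ℝ) / p - 1 ≤ N.factorial.factorization p := by
        have h3 : N / p ≤ N.factorial.factorization p := by
          rw [Nat.factorization_factorial hp' (Nat.lt_succ_of_lt (Nat.lt_succ_self _))]
          refine le_trans (by simp) (Finset.single_le_sum (f := fun i => N / p ^ i)
            (fun _ _ => Nat.zero_le _) (show 1 ∈ _ by simp))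
        have h4 : (N : ℝ) / p < (N / p : ℕ) + 1 := by
          rw [← Nat.floor_div_eq_div (K := ℝ)]; exact Nat.lt_floor_add_one _
        have h5 : ((N / p : ℕ) : ℝ) ≤ N.factorial.factorization p := by exact_mod_cast h3
        linarith
      calc _ = ((N : ℝ) / p - 1) * Real.log p := by ring
        _ ≤ _ := by gcongr
    rw [Finset.sum_sub_distrib, ← Finset.mul_sum] at h2
    linarith
  rw [abs_le]
  have hm1 := le_max_left (Real.log 4) (1 + K)
  have hm2 := le_max_right (Real.log 4) (1 + K)
  constructor
  · have : N * (-(1 + K)) ≤ N * (∑ p ∈ Nat.primesLE N, Real.log p / p - Real.log N) := by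
      nlinarith
    have := le_of_mul_le_mul_left this hN0
    linarith
  · have : N * (∑ p ∈ Nat.primesLE N, Real.log p / p - Real.log N) ≤ N * Real.log 4 := by
      nlinarith
    have := le_of_mul_le_mul_left this hN0
    linarith

lemma sum_primesLE_succ_eq_sum_range (g : ℕ → ℝ) (n : ℕ) :
    ∑ p ∈ Nat.primesLE (n + 1), g p =
      ∑ i ∈ Finset.range n, if (i + 2).Prime then g (i + 2) else 0 := by
  rw [Nat.primesLE_eq_filter_range, Finset.sum_filter, Finset.sum_range_succ',
    Finset.sum_range_succ']
  simp [Nat.not_prime_zero, Nat.not_prime_one]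

/-- The partial sums of `1 / (n log n)` differ from `log log n` by a convergent sequence. -/
lemma exists_tendsto_sum_one_div_mul_log_sub_log_log :
    ∃ c : ℝ, Tendsto (fun n : ℕ => ∑ i ∈ Finset.range (n + 1),
      1 / ((i + 2 : ℝ) * Real.log (i + 2)) - Real.log (Real.log (n + 2))) atTop (nhds c) := by
  have hlog (n : ℕ) : 0 < Real.log (n + 2 : ℝ) := Real.log_pos (by linarith [n.cast_nonneg (α := ℝ)])
  have hcast (n : ℕ) : ((n + 1 : ℕ) : ℝ) + 2 = n + 3 := by push_cast; ring
  have hlog3 (n : ℕ) : 0 < Real.log (n + 3 : ℝ) := hcast n ▸ hlog (n + 1)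
  have hratio (n : ℕ) : Real.log ((n + 3 : ℝ) / (n + 2)) =
      Real.log (n + 3 : ℝ) - Real.log (n + 2) := Real.log_div (by positivity) (by positivity)
  have hle (n : ℕ) : 1 / ((n + 3 : ℝ) * Real.log (n + 3)) ≤
      Real.log (Real.log (n + 3)) - Real.log (Real.log (n + 2)) := by
    have h1 := Real.one_sub_inv_le_log_of_pos (div_pos (hlog3 n) (hlog n))
    rw [Real.log_div (hlog3 n).ne' (hlog n).ne'] at h1
    refine le_trans ?_ h1
    have h2 := Real.one_sub_inv_le_log_of_pos (show 0 < (n + 3 : ℝ) / (n + 2) by positivity)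
    rw [hratio] at h2
    have h3 : 1 - ((n + 3 : ℝ) / (n + 2))⁻¹ = 1 / (n + 3) := by field_simp; ring
    have h4 : 1 - (Real.log (n + 3 : ℝ) / Real.log (n + 2))⁻¹ =
        (Real.log (n + 3 : ℝ) - Real.log (n + 2)) / Real.log (n + 3) := by
      have := (hlog n).ne'
      have := (hlog3 n).ne'
      field_simp
    rw [h4, ← div_div]
    exact div_le_div_of_nonneg_right (h3 ▸ h2) (hlog3 n).le
  have hge (n : ℕ) : Real.log (Real.log (n + 3)) - Real.log (Real.log (n + 2)) ≤
      1 / ((n + 2 : ℝ) * Real.log (n + 2)) := by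
    have h1 := Real.log_le_sub_one_of_pos (div_pos (hlog3 n) (hlog n))
    rw [Real.log_div (hlog3 n).ne' (hlog n).ne'] at h1
    refine le_trans h1 ?_
    have h2 := Real.log_le_sub_one_of_pos (show 0 < (n + 3 : ℝ) / (n + 2) by positivity)
    rw [hratio] at h2
    have h3 : (n + 3 : ℝ) / (n + 2) - 1 = 1 / (n + 2) := by field_simp; ring
    have h4 : Real.log (n + 3 : ℝ) / Real.log (n + 2) - 1 =
        (Real.log (n + 3 : ℝ) - Real.log (n + 2)) / Real.log (n + 2) := by
      have := (hlog n).ne'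
      field_simp
    rw [h4, ← div_div]
    exact div_le_div_of_nonneg_right (h3 ▸ h2) (hlog n).le
  have hlower (n : ℕ) : -Real.log (Real.log 2) ≤ ∑ i ∈ Finset.range n,
      1 / ((i + 2 : ℝ) * Real.log (i + 2)) - Real.log (Real.log (n + 2)) := by
    induction n with
    | zero => simp
    | succ n ih =>
      rw [Finset.sum_range_succ, hcast]
      linarith [hge n]
  refine ⟨_, tendsto_atTop_ciInf (antitone_nat_of_succ_le fun n => ?_)
    ⟨-Real.log (Real.log 2), ?_⟩⟩
  · rw [Finset.sum_range_succ _ (n + 1), hcast]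
    linarith [hle n]
  · rintro _ ⟨n, rfl⟩
    have h1 := hlower (n + 1)
    rw [hcast] at h1
    have h2 : 0 ≤ 1 / ((n + 3 : ℝ) * Real.log (n + 3)) := by
      have := hlog3 n
      positivity
    dsimp only
    linarith [hle n]

/-- Mertens' second theorem, in the form of existence of the limit. -/
lemma exists_tendsto_sum_primesLE_inv_sub_log_log :
    ∃ M : ℝ, Tendsto (fun N : ℕ => ∑ p ∈ Nat.primesLE N, (p : ℝ)⁻¹ - Real.log (Real.log N))
      atTop (nhds M) := by
  obtain ⟨B, hB⟩ := exists_abs_sum_primesLE_log_div_sub_log_le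
  obtain ⟨c, hc⟩ := exists_tendsto_sum_one_div_mul_log_sub_log_log
  let z : ℕ → ℝ := fun i =>
    (if (i + 2).Prime then Real.log ((i + 2 : ℕ) : ℝ) / ((i + 2 : ℕ) : ℝ) else 0) - 1 / (i + 2 : ℝ)
  let f : ℕ → ℝ := fun i => 1 / Real.log (i + 2)
  have hlog (n : ℕ) : 0 < Real.log (n + 2 : ℝ) := Real.log_pos (by linarith [n.cast_nonneg (α := ℝ)])
  have hz (n : ℕ) : ‖∑ i ∈ Finset.range n, z i‖ ≤ B + 1 := by
    have h1 := sum_primesLE_succ_eq_sum_range (fun p => Real.log p / p) n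
    have h2 : ∑ i ∈ Finset.range n, 1 / (i + 2 : ℝ) = harmonic (n + 1) - 1 := by
      rw [harmonic, Finset.sum_range_succ']
      push_cast
      simp only [one_div, inv_one, add_sub_cancel_right]
      exact Finset.sum_congr rfl fun i _ => by rw [add_assoc]; norm_num
    rw [Finset.sum_sub_distrib, ← h1, h2, Real.norm_eq_abs]
    have h3 := abs_le.1 (hB (n + 1))
    have h4 := log_add_one_le_harmonic (n + 1)
    have h5 := harmonic_le_one_add_log (n + 1)
    have h6 : Real.log ((n + 1 : ℕ) : ℝ) ≤ Real.log (((n + 1 : ℕ) : ℝ) + 1) :=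
      Real.log_le_log (by positivity) (by linarith)
    push_cast at *
    rw [abs_le]
    constructor <;> linarith
  have hf : Antitone f := fun a b hab => by
    have : (a : ℝ) ≤ b := by exact_mod_cast hab
    exact one_div_le_one_div_of_le (hlog a) (Real.log_le_log (by positivity) (by linarith))
  have hf0 : Tendsto f atTop (nhds 0) := by
    have : Tendsto (fun n : ℕ => (n + 2 : ℝ)) atTop atTop :=
      tendsto_atTop_add_const_right _ _ tendsto_natCast_atTop_atTop
    simpa [f] using! (Real.tendsto_log_atTop.comp this).inv_tendsto_atTop
  obtain ⟨L, hL⟩ := cauchySeq_tendsto_of_complete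
    (hf.cauchySeq_series_mul_of_tendsto_zero_of_bounded hf0 hz)
  refine ⟨L + c, ?_⟩
  rw [← tendsto_add_atTop_iff_nat 2]
  refine ((hL.comp (tendsto_add_atTop_nat 1)).add hc).congr fun n => ?_
  have h1 := sum_primesLE_succ_eq_sum_range (fun p => (p : ℝ)⁻¹) (n + 1)
  rw [show n + 2 = n + 1 + 1 from rfl, h1, Function.comp_apply, ← add_sub_assoc,
    ← Finset.sum_add_distrib]
  congr 1
  · refine Finset.sum_congr rfl fun i _ => ?_
    have := (hlog i).ne'
    have h2 : (i + 2 : ℝ) ≠ 0 := by positivity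
    by_cases h : (i + 2).Prime <;> simp only [f, z, h, if_true, if_false, smul_eq_mul] <;>
      push_cast <;> field_simp <;> ring
  · push_cast; ring_nf

open MeasureTheory Set in
/-- The Laplace transform of a step function with jumps `w n` at the points `t n`. -/
lemma hasSum_laplace_of_hasSum_jumps {w t : ℕ → ℝ} {A : ℝ → ℝ} {s : ℝ} (hs : 0 < s)
    (hw : ∀ n, 0 ≤ w n) (ht : ∀ n, 0 ≤ t n)
    (hA : ∀ u, 0 < u → HasSum (fun n => if t n ≤ u then w n else 0) (A u))
    (hsum : Summable fun n => w n * Real.exp (-s * t n)) :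
    HasSum (fun n => w n * Real.exp (-s * t n))
      (s * ∫ u in Ioi 0, A u * Real.exp (-s * u)) := by
  let F : ℕ → ℝ → ℝ := fun n => (Ici (t n)).indicator fun u => w n * Real.exp (-s * u)
  have hs' : -s < 0 := by linarith
  have hexp (a : ℝ) : IntegrableOn (fun u => Real.exp (-s * u)) (Ici a) :=
    (integrableOn_Ici_iff_integrableOn_Ioi (by simp)).2 (integrableOn_exp_mul_Ioi hs' a)
  have hF (n : ℕ) : Integrable (F n) (volume.restrict (Ici 0)) :=
    (((hexp 0).const_mul (w n)).indicator measurableSet_Ici)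
  have hint (n : ℕ) : ∫ u in Ici 0, F n u = w n * Real.exp (-s * t n) / s := by
    rw [setIntegral_indicator measurableSet_Ici, Ici_inter_Ici, sup_of_le_right (ht n),
      integral_const_mul, integral_Ici_eq_integral_Ioi, integral_exp_mul_Ioi hs']
    field_simp
  have hnn (n : ℕ) (u : ℝ) : 0 ≤ F n u :=
    indicator_nonneg (fun u _ => mul_nonneg (hw n) (Real.exp_pos _).le) u
  have hmain := hasSum_integral_of_summable_integral_norm hF (by
    simp only [Real.norm_of_nonneg (hnn _ _), hint]
    exact hsum.div_const s)
  have h1 : ∫ u in Ici 0, ∑' n, F n u = ∫ u in Ioi 0, A u * Real.exp (-s * u) := by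
    rw [integral_Ici_eq_integral_Ioi]
    refine setIntegral_congr_fun measurableSet_Ioi fun u hu => ?_
    refine HasSum.tsum_eq (((hA u hu).mul_right (Real.exp (-s * u))).congr_fun ?_)
    intro n
    by_cases h : t n ≤ u <;> simp [F, h]
  rw [h1] at hmain
  refine (hmain.mul_left s).congr_fun fun n => ?_
  rw [hint]
  field_simp

open MeasureTheory Set in
/-- The Abelian theorem for Laplace transforms of bounded functions. -/
lemma tendsto_mul_laplace_of_tendsto {D : ℝ → ℝ} {B c : ℝ} (hD : Measurable D)
    (hB : ∀ u, 0 < u → |D u| ≤ B) (hc : Tendsto D atTop (nhds c)) :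
    Tendsto (fun s : ℝ => s * ∫ u in Ioi 0, D u * Real.exp (-s * u)) (nhdsWithin 0 (Ioi 0))
      (nhds c) := by
  have h1 : Tendsto (fun s : ℝ => ∫ v in Ioi 0, D (v / s) * Real.exp (-v)) (nhdsWithin 0 (Ioi 0))
      (nhds (∫ v in Ioi 0, c * Real.exp (-v))) := by
    refine tendsto_integral_filter_of_dominated_convergence (fun v => B * Real.exp (-v))
      ?_ ?_ ((integrableOn_exp_neg_Ioi 0).const_mul B) ?_
    · refine Eventually.of_forall fun s => Measurable.aestronglyMeasurable ?_
      exact (hD.comp (measurable_id.div_const s)).mul (by fun_prop)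
    · filter_upwards [self_mem_nhdsWithin] with s hs
      filter_upwards [ae_restrict_mem measurableSet_Ioi] with v hv
      rw [norm_mul, Real.norm_of_nonneg (Real.exp_pos _).le]
      exact mul_le_mul_of_nonneg_right (hB _ (div_pos hv hs)) (Real.exp_pos _).le
    · filter_upwards [ae_restrict_mem measurableSet_Ioi] with v hv
      refine Tendsto.mul_const _ (hc.comp ?_)
      exact Tendsto.const_mul_atTop hv tendsto_inv_nhdsGT_zero
  rw [integral_const_mul, integral_exp_neg_Ioi_zero, mul_one] at h1
  refine h1.congr' ?_
  filter_upwards [self_mem_nhdsWithin] with s hs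
  have hs : 0 < s := hs
  have h2 := integral_comp_mul_left_Ioi (fun v => D (v / s) * Real.exp (-v)) 0 hs
  rw [mul_zero, smul_eq_mul] at h2
  rw [← mul_right_inj' (inv_ne_zero hs.ne'), ← h2, inv_mul_cancel_left₀ hs.ne']
  refine setIntegral_congr_fun measurableSet_Ioi fun u _ => ?_
  simp only [mul_div_cancel_left₀ _ hs.ne', neg_mul]

lemma abs_neg_log_one_sub_sub_self_le {x : ℝ} (h0 : 0 ≤ x) (h1 : x ≤ 1 / 2) :
    |-Real.log (1 - x) - x| ≤ 2 * x ^ 2 := by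
  have hpos : 0 < 1 - x := by linarith
  have h2 := Real.log_le_sub_one_of_pos hpos
  have h3 := Real.one_sub_inv_le_log_of_pos hpos
  have h4 : (1 - x)⁻¹ ≤ 1 + x + 2 * x ^ 2 := by
    rw [inv_le_iff_one_le_mul₀ hpos]
    nlinarith [mul_nonneg h0 h0, mul_nonneg (mul_nonneg h0 h0) (sub_nonneg.2 h1)]
  rw [abs_le]
  constructor <;> nlinarith [sq_nonneg x]

/-- The Euler product of the real zeta function. -/
lemma tendsto_prod_primesBelow_one_sub_rpow_neg {s : ℝ} (hs : 1 < s) :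
    Tendsto (fun n : ℕ => ∏ p ∈ Nat.primesBelow n, (1 - (p : ℝ) ^ (-s))⁻¹) atTop
      (nhds (∑' n : ℕ, 1 / (n : ℝ) ^ s)) := by
  let f : ℕ →*₀ ℝ :=
    { toFun := fun n => (n : ℝ) ^ (-s)
      map_zero' := by simp [Real.zero_rpow (show -s ≠ 0 by linarith)]
      map_one' := by simp
      map_mul' := fun m n => by
        push_cast
        exact Real.mul_rpow (Nat.cast_nonneg m) (Nat.cast_nonneg n) }
  have hf : Summable (‖f ·‖) := (Real.summable_nat_rpow.2 (by linarith : -s < -1)).norm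
  have h := EulerProduct.eulerProduct_completely_multiplicative hf
  have h2 : ∑' n, f n = ∑' n : ℕ, 1 / (n : ℝ) ^ s := tsum_congr fun n => by
    simp [f, Real.rpow_neg (Nat.cast_nonneg n)]
  rwa [h2] at h

lemma rpow_neg_le_inv {n : ℕ} {s : ℝ} (hn : 2 ≤ n) (hs : 1 ≤ s) :
    (n : ℝ) ^ (-s) ≤ (n : ℝ)⁻¹ := by
  rw [← Real.rpow_neg_one]
  exact Real.rpow_le_rpow_of_exponent_le (by exact_mod_cast (by lia : 1 ≤ n)) (by linarith)

lemma inv_le_half {n : ℕ} (hn : 2 ≤ n) : (n : ℝ)⁻¹ ≤ 1 / 2 := by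
  rw [one_div]
  exact inv_anti₀ two_pos (by exact_mod_cast hn)

lemma abs_ite_prime_log_remainder_le {s : ℝ} (hs : 1 ≤ s) (n : ℕ) :
    ‖if n.Prime then -Real.log (1 - (n : ℝ) ^ (-s)) - (n : ℝ) ^ (-s) else 0‖ ≤
      2 * (1 / (n : ℝ) ^ 2) := by
  split_ifs with h
  · have h1 := rpow_neg_le_inv h.two_le hs
    have h0 : 0 ≤ (n : ℝ) ^ (-s) := by positivity
    refine (abs_neg_log_one_sub_sub_self_le h0 (h1.trans (inv_le_half h.two_le))).trans ?_
    rw [one_div, ← inv_pow]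
    gcongr
  · rw [norm_zero]
    positivity

lemma summable_two_mul_one_div_nat_sq : Summable fun n : ℕ => 2 * (1 / (n : ℝ) ^ 2) :=
  (Real.summable_one_div_nat_pow.2 one_lt_two).mul_left 2

/-- The contribution of higher prime powers to `log ζ(s)`. -/
noncomputable def logZetaRemainder (s : ℝ) : ℝ :=
  ∑' n : ℕ, if n.Prime then -Real.log (1 - (n : ℝ) ^ (-s)) - (n : ℝ) ^ (-s) else 0

lemma summable_logZetaRemainder {s : ℝ} (hs : 1 ≤ s) : Summable fun n : ℕ =>
    if n.Prime then -Real.log (1 - (n : ℝ) ^ (-s)) - (n : ℝ) ^ (-s) else 0 :=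
  Summable.of_norm_bounded summable_two_mul_one_div_nat_sq (abs_ite_prime_log_remainder_le hs)

lemma tendsto_logZetaRemainder :
    Tendsto (fun s : ℝ => logZetaRemainder (1 + s)) (nhdsWithin 0 (Set.Ioi 0))
      (nhds (logZetaRemainder 1)) := by
  refine tendsto_tsum_of_dominated_convergence summable_two_mul_one_div_nat_sq (fun n => ?_) ?_
  · by_cases h : n.Prime
    · simp only [h, if_true]
      refine tendsto_nhdsWithin_of_tendsto_nhds ?_
      have hn : (n : ℝ) ≠ 0 := by exact_mod_cast h.ne_zero
      have h1 : Tendsto (fun s : ℝ => (n : ℝ) ^ (-(1 + s))) (nhds 0) (nhds ((n : ℝ) ^ (-1 : ℝ))) := by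
        have : Continuous fun s : ℝ => (n : ℝ) ^ (-(1 + s)) :=
          Real.continuous_const_rpow hn |>.comp (by fun_prop)
        simpa using this.tendsto 0
      have h2 : 1 - (n : ℝ) ^ (-1 : ℝ) ≠ 0 := by
        rw [Real.rpow_neg_one]
        linarith [inv_le_half h.two_le]
      exact ((h1.const_sub 1).log h2).neg.sub h1
    · simp [h]
  · filter_upwards [self_mem_nhdsWithin] with s hs
    have hs : 0 < s := hs
    exact abs_ite_prime_log_remainder_le (by linarith)

lemma summable_ite_prime_rpow_neg {s : ℝ} (hs : 1 < s) :
    Summable fun n : ℕ => if n.Prime then (n : ℝ) ^ (-s) else 0 := by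
  refine Summable.of_norm_bounded (Real.summable_nat_rpow.2 (by linarith : -s < -1)) fun n => ?_
  split_ifs
  · exact (Real.norm_of_nonneg (by positivity)).le
  · simp; positivity

lemma log_tsum_one_div_nat_rpow {s : ℝ} (hs : 1 < s) :
    Real.log (∑' n : ℕ, 1 / (n : ℝ) ^ s) =
      (∑' n : ℕ, if n.Prime then (n : ℝ) ^ (-s) else 0) + logZetaRemainder s := by
  have hsum : Summable fun n : ℕ => 1 / (n : ℝ) ^ s := Real.summable_one_div_nat_rpow.2 hs
  have hpos : 0 < ∑' n : ℕ, 1 / (n : ℝ) ^ s :=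
    hsum.tsum_pos (fun n => by positivity) 1 (by simp)
  have h1 := (tendsto_prod_primesBelow_one_sub_rpow_neg hs).log hpos.ne'
  have h2 := ((summable_ite_prime_rpow_neg hs).hasSum.add
    (summable_logZetaRemainder hs.le).hasSum).tendsto_sum_nat
  refine tendsto_nhds_unique h1 (h2.congr fun n => ?_)
  rw [Real.log_prod, Nat.primesBelow, Finset.sum_filter]
  · refine Finset.sum_congr rfl fun p _ => ?_
    split_ifs <;> simp
  · intro p hp
    have hp := (Nat.prime_of_mem_primesBelow hp).two_le
    have := rpow_neg_le_inv hp hs.le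
    have := inv_le_half hp
    exact inv_ne_zero (by linarith)

lemma tendsto_log_floor_exp_div_floor :
    Tendsto (fun u : ℝ => Real.log (⌊Real.exp u⌋₊ : ℝ) / (⌊u⌋₊ : ℝ)) atTop (nhds 1) := by
  have h1 : Tendsto (fun u : ℝ => Real.log ((⌊Real.exp u⌋₊ : ℝ) / Real.exp u)) atTop (nhds 0) := by
    have := ((tendsto_nat_floor_div_atTop (R := ℝ)).comp Real.tendsto_exp_atTop).log one_ne_zero
    simpa using! this
  have h2 := ((h1.div_atTop tendsto_id).add_const 1).div
    (tendsto_nat_floor_div_atTop (R := ℝ)) one_ne_zero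
  rw [zero_add, div_one] at h2
  refine h2.congr' ?_
  filter_upwards [eventually_ge_atTop 1] with u hu
  have hf : (⌊Real.exp u⌋₊ : ℝ) ≠ 0 := by
    have : 0 < ⌊Real.exp u⌋₊ := Nat.floor_pos.2 (Real.one_le_exp (by linarith))
    positivity
  have hu' : (⌊u⌋₊ : ℝ) ≠ 0 := by
    have : 0 < ⌊u⌋₊ := Nat.floor_pos.2 hu
    positivity
  have hu0 : u ≠ 0 := by linarith
  simp only [Pi.div_apply, id_eq]
  rw [Real.log_div hf (Real.exp_pos _).ne', Real.log_exp]
  field_simp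
  ring

/-- The difference of the counting functions of the prime reciprocals (on a logarithmic scale) and
of the harmonic series. -/
noncomputable def primeHarmonicDiff (u : ℝ) : ℝ :=
  ∑ p ∈ Nat.primesLE ⌊Real.exp u⌋₊, (p : ℝ)⁻¹ - (harmonic ⌊u⌋₊ : ℝ)

lemma measurable_primeHarmonicDiff : Measurable primeHarmonicDiff := by
  have h1 : Measurable fun n : ℕ => ∑ p ∈ Nat.primesLE n, (p : ℝ)⁻¹ := measurable_from_nat
  have h2 : Measurable fun n : ℕ => (harmonic n : ℝ) := measurable_from_nat
  exact (h1.comp (Nat.measurable_floor.comp Real.measurable_exp)).sub (h2.comp Nat.measurable_floor)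

lemma tendsto_primeHarmonicDiff {M : ℝ}
    (hM : Tendsto (fun N : ℕ => ∑ p ∈ Nat.primesLE N, (p : ℝ)⁻¹ - Real.log (Real.log N))
      atTop (nhds M)) :
    Tendsto primeHarmonicDiff atTop (nhds (M - Real.eulerMascheroniConstant)) := by
  have hfl : Tendsto (fun u : ℝ => ⌊u⌋₊) atTop atTop := tendsto_nat_floor_atTop
  have h1 := hM.comp (hfl.comp Real.tendsto_exp_atTop)
  have h2 := Real.tendsto_harmonic_sub_log.comp hfl
  have h3 := tendsto_log_floor_exp_div_floor.log one_ne_zero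
  have h4 := (h1.sub h2).add h3
  rw [Real.log_one, add_zero] at h4
  refine h4.congr' ?_
  filter_upwards [eventually_ge_atTop 1] with u hu
  have hf : 1 < (⌊Real.exp u⌋₊ : ℝ) := by
    have : 2 ≤ ⌊Real.exp u⌋₊ := Nat.le_floor (by
      have := Real.add_one_le_exp u
      push_cast
      linarith)
    exact_mod_cast this
  have hu' : (⌊u⌋₊ : ℝ) ≠ 0 := by
    have : 0 < ⌊u⌋₊ := Nat.floor_pos.2 hu
    positivity
  simp only [Function.comp_apply, primeHarmonicDiff]
  rw [Real.log_div (Real.log_pos hf).ne' hu']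
  ring

lemma exists_abs_primeHarmonicDiff_le {c : ℝ} (hc : Tendsto primeHarmonicDiff atTop (nhds c)) :
    ∃ B : ℝ, ∀ u, 0 < u → |primeHarmonicDiff u| ≤ B := by
  obtain ⟨U, hU⟩ := eventually_atTop.1 (hc.abs.eventually_le_const (lt_add_one |c|))
  refine ⟨max (|c| + 1)
    (∑ p ∈ Nat.primesLE ⌊Real.exp U⌋₊, (p : ℝ)⁻¹ + (harmonic ⌊U⌋₊ : ℝ)), fun u _ => ?_⟩
  rcases le_total U u with h | h
  · exact (hU u h).trans (le_max_left _ _)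
  · refine le_trans ?_ (le_max_right _ _)
    have h1 : ∑ p ∈ Nat.primesLE ⌊Real.exp u⌋₊, (p : ℝ)⁻¹ ≤
        ∑ p ∈ Nat.primesLE ⌊Real.exp U⌋₊, (p : ℝ)⁻¹ := by
      refine Finset.sum_le_sum_of_subset_of_nonneg (fun p hp => ?_) fun _ _ _ => by positivity
      rw [Nat.mem_primesLE] at hp ⊢
      exact ⟨hp.1.trans (Nat.floor_le_floor (Real.exp_le_exp.2 h)), hp.2⟩
    have h2 : (harmonic ⌊u⌋₊ : ℝ) ≤ harmonic ⌊U⌋₊ := by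
      have : harmonic ⌊u⌋₊ ≤ harmonic ⌊U⌋₊ :=
        Finset.sum_le_sum_of_subset_of_nonneg
          (Finset.range_subset_range.2 (Nat.floor_le_floor h)) fun _ _ _ => by positivity
      exact_mod_cast this
    have h3 : 0 ≤ ∑ p ∈ Nat.primesLE ⌊Real.exp u⌋₊, (p : ℝ)⁻¹ := by positivity
    have h4 : (0 : ℝ) ≤ harmonic ⌊u⌋₊ := by
      have : 0 ≤ harmonic ⌊u⌋₊ := Finset.sum_nonneg fun _ _ => by positivity
      exact_mod_cast this
    rw [primeHarmonicDiff, abs_le]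
    constructor <;> linarith

open MeasureTheory Set in
lemma laplace_sum_primesLE {s : ℝ} (hs : 0 < s) :
    s * ∫ u in Ioi 0, (∑ p ∈ Nat.primesLE ⌊Real.exp u⌋₊, (p : ℝ)⁻¹) * Real.exp (-s * u) =
      ∑' n : ℕ, if n.Prime then (n : ℝ) ^ (-(1 + s)) else 0 := by
  have hterm (n : ℕ) : (if n.Prime then (n : ℝ)⁻¹ else 0) * Real.exp (-s * Real.log n) =
      if n.Prime then (n : ℝ) ^ (-(1 + s)) else 0 := by
    split_ifs with h
    · have hn : (0 : ℝ) < n := by exact_mod_cast h.pos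
      rw [neg_add, Real.rpow_add hn, Real.rpow_neg_one, Real.rpow_def_of_pos hn (-s), mul_comm (-s)]
    · simp
  have h := hasSum_laplace_of_hasSum_jumps (w := fun n => if n.Prime then (n : ℝ)⁻¹ else 0)
    (t := fun n => Real.log n) (A := fun u => ∑ p ∈ Nat.primesLE ⌊Real.exp u⌋₊, (p : ℝ)⁻¹) hs
    (fun n => by split_ifs <;> positivity) (fun n => Real.log_natCast_nonneg n) (fun u _ => ?_) ?_
  · simp only [hterm] at h
    exact h.tsum_eq.symm
  · have h1 : ∑ p ∈ Nat.primesLE ⌊Real.exp u⌋₊, (p : ℝ)⁻¹ = ∑ p ∈ Nat.primesLE ⌊Real.exp u⌋₊,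
        if Real.log p ≤ u then (if p.Prime then (p : ℝ)⁻¹ else 0) else 0 := by
      refine Finset.sum_congr rfl fun p hp => ?_
      obtain ⟨hp1, hp2⟩ := Nat.mem_primesLE.1 hp
      have hp3 : Real.log p ≤ u := (Real.log_le_iff_le_exp (by exact_mod_cast hp2.pos)).2
        ((Nat.le_floor_iff (Real.exp_pos u).le).1 hp1)
      simp [hp2, hp3]
    rw [h1]
    refine hasSum_sum_of_ne_finset_zero fun n hn => ?_
    by_cases hp : n.Prime
    · have : ¬ Real.log n ≤ u := fun hle => hn (Nat.mem_primesLE.2 ⟨Nat.le_floor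
        ((Real.log_le_iff_le_exp (by exact_mod_cast hp.pos)).1 hle), hp⟩)
      simp [this]
    · simp [hp]
  · simp only [hterm]
    exact summable_ite_prime_rpow_neg (by linarith)

open MeasureTheory Set in
lemma laplace_harmonic {s : ℝ} (hs : 0 < s) :
    s * ∫ u in Ioi 0, (harmonic ⌊u⌋₊ : ℝ) * Real.exp (-s * u) =
      -Real.log (1 - Real.exp (-s)) := by
  have hsum : HasSum (fun n : ℕ => (n : ℝ)⁻¹ * Real.exp (-s * n)) (-Real.log (1 - Real.exp (-s))) := by
    have h1 : |Real.exp (-s)| < 1 := by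
      rw [abs_of_pos (Real.exp_pos _), Real.exp_lt_one_iff]
      linarith
    rw [← hasSum_nat_add_iff' 1]
    simp only [Finset.range_one, Finset.sum_singleton, Nat.cast_zero, inv_zero, zero_mul, sub_zero]
    refine (Real.hasSum_pow_div_log_of_abs_lt_one h1).congr_fun fun n => ?_
    rw [← Real.exp_nat_mul, div_eq_inv_mul]
    push_cast
    ring_nf
  have h := hasSum_laplace_of_hasSum_jumps (w := fun n => (n : ℝ)⁻¹)
    (t := fun n => n) (A := fun u => (harmonic ⌊u⌋₊ : ℝ)) hs
    (fun n => by positivity) (fun n => n.cast_nonneg) (fun u hu => ?_) hsum.summable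
  · exact h.unique hsum
  · have h1 : (harmonic ⌊u⌋₊ : ℝ) = ∑ n ∈ Finset.Icc 1 ⌊u⌋₊, if (n : ℝ) ≤ u then (n : ℝ)⁻¹ else 0 := by
      rw [harmonic_eq_sum_Icc]
      push_cast
      refine Finset.sum_congr rfl fun n hn => ?_
      rw [if_pos ((Nat.le_floor_iff hu.le).1 (Finset.mem_Icc.1 hn).2)]
    rw [h1]
    refine hasSum_sum_of_ne_finset_zero fun n hn => ?_
    rcases Nat.eq_zero_or_pos n with rfl | hn0
    · simp
    · rw [if_neg fun hle => hn (Finset.mem_Icc.2 ⟨hn0, Nat.le_floor hle⟩)]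

open MeasureTheory Set in
lemma laplace_primeHarmonicDiff {s : ℝ} (hs : 0 < s) :
    s * ∫ u in Ioi 0, primeHarmonicDiff u * Real.exp (-s * u) =
      (∑' n : ℕ, if n.Prime then (n : ℝ) ^ (-(1 + s)) else 0) + Real.log (1 - Real.exp (-s)) := by
  have hP : 0 < ∑' n : ℕ, if n.Prime then (n : ℝ) ^ (-(1 + s)) else 0 := by
    refine (summable_ite_prime_rpow_neg (by linarith)).tsum_pos (fun n => ?_) 2 ?_
    · split_ifs <;> positivity
    · rw [if_pos Nat.prime_two]; positivity
  have hH : 0 < -Real.log (1 - Real.exp (-s)) := by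
    have h1 : Real.exp (-s) < 1 := Real.exp_lt_one_iff.2 (by linarith)
    linarith [Real.log_neg (sub_pos.2 h1) (by linarith [Real.exp_pos (-s)])]
  have h1 := laplace_sum_primesLE hs
  have h2 := laplace_harmonic hs
  have i1 := Integrable.of_integral_ne_zero (right_ne_zero_of_mul (h1.trans_ne hP.ne'))
  have i2 := Integrable.of_integral_ne_zero (right_ne_zero_of_mul (h2.trans_ne hH.ne'))
  simp only [primeHarmonicDiff, sub_mul]
  rw [integral_sub i1 i2, mul_sub, h1, h2, sub_neg_eq_add]

/-- Evaluation of the Mertens constant. -/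
lemma mertens_constant_eq {M : ℝ}
    (hM : Tendsto (fun N : ℕ => ∑ p ∈ Nat.primesLE N, (p : ℝ)⁻¹ - Real.log (Real.log N))
      atTop (nhds M)) :
    M + logZetaRemainder 1 = Real.eulerMascheroniConstant := by
  have hD := tendsto_primeHarmonicDiff hM
  obtain ⟨B, hB⟩ := exists_abs_primeHarmonicDiff_le hD
  have h1 := tendsto_mul_laplace_of_tendsto measurable_primeHarmonicDiff hB hD
  have hz : Tendsto (fun s : ℝ => Real.log (s * ∑' n : ℕ, 1 / (n : ℝ) ^ (1 + s)))
      (nhdsWithin 0 (Set.Ioi 0)) (nhds 0) := by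
    have hshift : Tendsto (fun s : ℝ => 1 + s) (nhdsWithin 0 (Set.Ioi 0))
        (nhdsWithin 1 (Set.Ioi 1)) := by
      refine tendsto_nhdsWithin_iff.2 ⟨?_, ?_⟩
      · exact tendsto_nhdsWithin_of_tendsto_nhds
          (by simpa using (continuous_const_add (1 : ℝ)).tendsto 0)
      · filter_upwards [self_mem_nhdsWithin] with s hs
        simpa using hs
    have h := (tendsto_sub_mul_tsum_nat_rpow.comp hshift).log one_ne_zero
    simpa [Function.comp_def] using! h
  have he : Tendsto (fun s : ℝ => Real.log ((1 - Real.exp (-s)) / s))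
      (nhdsWithin 0 (Set.Ioi 0)) (nhds 0) := by
    have hd : HasDerivAt (fun s : ℝ => 1 - Real.exp (-s)) 1 0 := by
      have := ((hasDerivAt_neg (0 : ℝ)).exp).const_sub 1
      simpa using this
    have h := (hd.tendsto_slope_zero_right).log one_ne_zero
    simpa [div_eq_inv_mul] using h
  have h2 := (hz.add he).sub tendsto_logZetaRemainder
  have h3 : M - Real.eulerMascheroniConstant = 0 + 0 - logZetaRemainder 1 := by
    refine tendsto_nhds_unique h1 (h2.congr' ?_)
    filter_upwards [self_mem_nhdsWithin] with s hs
    have hs : 0 < s := hs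
    have hsum : Summable fun n : ℕ => 1 / (n : ℝ) ^ (1 + s) :=
      Real.summable_one_div_nat_rpow.2 (by linarith)
    have hpos : 0 < ∑' n : ℕ, 1 / (n : ℝ) ^ (1 + s) :=
      hsum.tsum_pos (fun n => by positivity) 1 (by simp)
    have hexp : 0 < 1 - Real.exp (-s) := sub_pos.2 (Real.exp_lt_one_iff.2 (by linarith))
    rw [laplace_primeHarmonicDiff hs, Real.log_mul hs.ne' hpos.ne', Real.log_div hexp.ne' hs.ne',
      log_tsum_one_div_nat_rpow (by linarith)]
    ring
  linarith

/-- Mertens' third theorem. -/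
lemma tendsto_prod_primesLE_div_exp_mul_log :
    Tendsto (fun N : ℕ => (∏ p ∈ Nat.primesLE N, (1 - (p : ℝ)⁻¹)⁻¹) /
      (Real.exp Real.eulerMascheroniConstant * Real.log N)) atTop (nhds 1) := by
  obtain ⟨M, hM⟩ := exists_tendsto_sum_primesLE_inv_sub_log_log
  have h1 := (summable_logZetaRemainder le_rfl).hasSum.tendsto_sum_nat.comp (tendsto_add_atTop_nat 1)
  have h2 := hM.add h1
  have h3 := (Real.continuous_exp.tendsto _).comp (h2.sub_const Real.eulerMascheroniConstant)
  have h4 : M + (∑' n : ℕ, if n.Prime then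
      -Real.log (1 - (n : ℝ) ^ (-1 : ℝ)) - (n : ℝ) ^ (-1 : ℝ) else 0) -
      Real.eulerMascheroniConstant = 0 := sub_eq_zero.2 (mertens_constant_eq hM)
  rw [h4, Real.exp_zero] at h3
  refine h3.congr' ?_
  filter_upwards [eventually_ge_atTop 2] with N hN
  have hlog : 0 < Real.log N := Real.log_pos (by exact_mod_cast (by lia : 1 < N))
  have hfac : ∀ p ∈ Nat.primesLE N, 0 < (1 - (p : ℝ)⁻¹)⁻¹ := fun p hp => by
    have := inv_le_half (Nat.two_le_of_mem_primesLE hp)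
    exact inv_pos.2 (by linarith)
  have hprod : 0 < ∏ p ∈ Nat.primesLE N, (1 - (p : ℝ)⁻¹)⁻¹ := Finset.prod_pos hfac
  rw [← Real.exp_log (div_pos hprod (mul_pos (Real.exp_pos _) hlog)),
    Real.log_div hprod.ne' (mul_pos (Real.exp_pos _) hlog).ne',
    Real.log_mul (Real.exp_pos _).ne' hlog.ne', Real.log_exp, Real.log_prod fun p hp => (hfac p hp).ne']
  simp only [Function.comp_apply, Real.log_inv, Real.rpow_neg_one]
  rw [← Finset.sum_filter, ← Nat.primesLE_eq_filter_range, Finset.sum_sub_distrib]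
  ring_nf

/-- **Corollary 1 for `k = 2`.** The sum of `1/φ(n)` over squarefree positive integers `n`
all of whose prime factors are `≤ N` is asymptotic to `e^γ log N` as `N → ∞`. -/
theorem squarefree_totient_sum_asymp :
    Tendsto
      (fun N : ℕ =>
        (∑' n : {n : ℕ // 0 < n ∧ (∀ p : ℕ, p.Prime → p ∣ n → p ≤ N) ∧
              ∀ p : ℕ, p.Prime → ¬ p ^ 2 ∣ n},
            (1 : ℝ) / (Nat.totient (n : ℕ) : ℝ)) /
          (Real.exp Real.eulerMascheroniConstant * Real.log N))
      atTop (nhds 1) := by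
  simp only [tsum_squarefree_smooth_one_div_totient]
  exact tendsto_prod_primesLE_div_exp_mul_log
end
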